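/- arXiv:0806.0901 — 10 statements merged into one kernel-verified Lean document; each statement's English description precedes it below -/
import Mathlib

section
/- Let X, Y : V → V be linear transformations and let c, θ be nonzero scalars in 𝕂. Then the following are equivalent: (i) the expression qXY − q⁻¹YX − (q − q⁻¹)(X² + c·I) vanishes on the eigenspace V_X(θ) = {v ∈ V : Xv = θv}; (ii) (Y − θ·I − c θ⁻¹·I) V_X(θ) ⊆ V_X(q⁻²θ). -/
/-!
For `v` with `X v = θ v`, the expression in (i) applied to `v` equals `q • (X w - q⁻² θ w)`, where
`w = (Y - θ - c θ⁻¹) v`. As `q ≠ 0`, it vanishes exactly when `w` lies in the eigenspace of `X`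
for `q⁻² θ`.
-/

theorem stmt_0 {𝕂 : Type*} [Field 𝕂]
    {V : Type*} [AddCommGroup V] [Module 𝕂 V] [FiniteDimensional 𝕂 V]
    (hV : 0 < Module.finrank 𝕂 V)
    {q : 𝕂} (hq0 : q ≠ 0)
    (X Y : Module.End 𝕂 V) {c θ : 𝕂} (hc : c ≠ 0) (hθ : θ ≠ 0) :
    (∀ v ∈ Module.End.eigenspace X θ,
        (q • (X * Y) - q⁻¹ • (Y * X) - (q - q⁻¹) • (X ^ 2 + c • (1 : Module.End 𝕂 V))) v = 0) ↔
      Submodule.map (Y - θ • (1 : Module.End 𝕂 V) - (c * θ⁻¹) • (1 : Module.End 𝕂 V))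
          (Module.End.eigenspace X θ) ≤
        Module.End.eigenspace X (q⁻¹ ^ 2 * θ) := by
  rw [Submodule.map_le_iff_le_comap, SetLike.le_def]
  refine forall₂_congr fun v hv => ?_
  rw [Module.End.mem_eigenspace_iff] at hv
  rw [Submodule.mem_comap, Module.End.mem_eigenspace_iff, ← sub_eq_zero (b := _ • _)]
  refine Iff.trans (Eq.congr_left ?_) (smul_eq_zero_iff_right hq0)
  simp only [LinearMap.sub_apply, LinearMap.add_apply, LinearMap.smul_apply, Module.End.mul_apply,
    Module.End.one_apply, pow_two, map_sub, map_smul, hv]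
  match_scalars <;> field_simp
  ring
end

section
/- The linear maps A, B satisfy (qAB − q⁻¹BA)/(q − q⁻¹) = I and (qBA* − q⁻¹A*B)/(q − q⁻¹) = B² + c·I. -/
/-!
Write `Uᵢ = V₀ + ⋯ + Vᵢ` and `Uᵢ* = V₀* + ⋯ + Vᵢ*`, so that `Wᵢ = Uᵢ* ∩ U_{d-i}`. Since `A - θᵢ` maps
`Uᵢ` into `Uᵢ₋₁` (`sub_smul_mem_flag`) and `A` maps `Uᵢ*` into `Uᵢ₊₁*` (`map_mem_flag`), the map
`A - θ_{d-i}` sends `Wᵢ` into `Wᵢ₊₁`; in the same way `A* - θᵢ*` sends `Wᵢ` into `Wᵢ₋₁`.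
As `B` acts on `Wᵢ₊₁` and `Wᵢ₋₁` as `q²` and `q⁻²` times its eigenvalue on `Wᵢ`, the components
in `Wᵢ₊₁` and `Wᵢ₋₁` cancel in the two `q`-commutators, which therefore act on `Wᵢ` as scalars.
The `Wᵢ` span `V`, so it is enough to compare both sides on each of them.
-/

/-- The partial sum `U₀ + ⋯ + Uᵢ` of a sequence of subspaces; it is zero for `i < 0`. -/
def flag {K V : Type*} [Field K] [AddCommGroup V] [Module K V]
    (U : ℤ → Submodule K V) (i : ℤ) : Submodule K V :=
  ⨆ j ∈ Finset.Icc (0 : ℤ) i, U j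

section
variable {K V : Type*} [Field K] [AddCommGroup V] [Module K V]

lemma le_flag (U : ℤ → Submodule K V) {i j : ℤ} (h0 : 0 ≤ j) (hj : j ≤ i) : U j ≤ flag U i :=
  le_iSup₂_of_le j (Finset.mem_Icc.2 ⟨h0, hj⟩) le_rfl

lemma flag_of_neg (U : ℤ → Submodule K V) {i : ℤ} (hi : i < 0) : flag U i = ⊥ := by
  simp [flag, Finset.Icc_eq_empty (not_le.2 hi)]

lemma sub_smul_mem_flag {T : Module.End K V} {U : ℤ → Submodule K V} {θ : ℤ → K} {d : ℤ}
    (hU : ∀ i, 0 ≤ i → i ≤ d → U i = Module.End.eigenspace T (θ i))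
    {i : ℤ} (hi : i ≤ d) {v : V} (hv : v ∈ flag U i) :
    T v - θ i • v ∈ flag U (i - 1) := by
  suffices h : flag U i ≤ (flag U (i - 1)).comap (T - θ i • (1 : Module.End K V)) by
    simpa using h hv
  refine iSup₂_le fun j hj u hu => ?_
  obtain ⟨h0, hji⟩ := Finset.mem_Icc.1 hj
  have hTu : T u = θ j • u := by
    rw [hU j h0 (hji.trans hi)] at hu
    exact Module.End.mem_eigenspace_iff.1 hu
  simp only [Submodule.mem_comap, LinearMap.sub_apply, LinearMap.smul_apply,
    Module.End.one_apply, hTu]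
  rcases hji.lt_or_eq with h | rfl
  · have := le_flag U h0 (show j ≤ i - 1 by lia) hu
    exact Submodule.sub_mem _ (Submodule.smul_mem _ _ this) (Submodule.smul_mem _ _ this)
  · simp

lemma map_mem_flag {T : Module.End K V} {U : ℤ → Submodule K V}
    (hneg : ∀ i, i < 0 → U i = ⊥)
    (hT : ∀ i, (U i).map T ≤ U (i - 1) ⊔ U i ⊔ U (i + 1))
    {i : ℤ} {v : V} (hv : v ∈ flag U i) : T v ∈ flag U (i + 1) := by
  suffices h : flag U i ≤ (flag U (i + 1)).comap T from h hv
  refine iSup₂_le fun j hj => Submodule.map_le_iff_le_comap.1 ((hT j).trans ?_)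
  obtain ⟨h0, hji⟩ := Finset.mem_Icc.1 hj
  refine sup_le (sup_le ?_ (le_flag U h0 (by lia))) (le_flag U (by lia) (by lia))
  rcases h0.lt_or_eq with h | rfl
  · exact le_flag U (by lia) (by lia)
  · rw [hneg _ (by lia)]
    exact bot_le

lemma flag_mono (U : ℤ → Submodule K V) {i j : ℤ} (h : i ≤ j) : flag U i ≤ flag U j :=
  iSup₂_le fun _ hk =>
    le_flag U (Finset.mem_Icc.1 hk).1 ((Finset.mem_Icc.1 hk).2.trans h)

end


theorem stmt_1
    {𝕂 : Type*} [Field 𝕂] [IsAlgClosed 𝕂]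
    {V : Type*} [AddCommGroup V] [Module 𝕂 V] [FiniteDimensional 𝕂 V]
    (hV : 0 < Module.finrank 𝕂 V)
    {q : 𝕂} (hq0 : q ≠ 0) (hqru : ∀ n : ℕ, 0 < n → q ^ n ≠ 1)
    {c : 𝕂} (hc : c ≠ 0)
    (A Astar : Module.End 𝕂 V)
    (d : ℤ) (hd : 0 ≤ d)
    (Vs Vst : ℤ → Submodule 𝕂 V)
    (hVout : ∀ i : ℤ, i < 0 ∨ d < i → Vs i = ⊥)
    (hVstout : ∀ i : ℤ, i < 0 ∨ d < i → Vst i = ⊥)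
    (hVeig : ∀ i : ℤ, 0 ≤ i → i ≤ d → Vs i = Module.End.eigenspace A (q ^ (2*i - d)))
    (hVne : ∀ i : ℤ, 0 ≤ i → i ≤ d → Vs i ≠ ⊥)
    (hVtot : (⨆ i ∈ Finset.Icc (0:ℤ) d, Vs i) = ⊤)
    (hVsteig : ∀ i : ℤ, 0 ≤ i → i ≤ d →
      Vst i = Module.End.eigenspace Astar (q ^ (2*i - d) + c * q ^ (d - 2*i)))
    (hVstne : ∀ i : ℤ, 0 ≤ i → i ≤ d → Vst i ≠ ⊥)
    (hVsttot : (⨆ i ∈ Finset.Icc (0:ℤ) d, Vst i) = ⊤)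
    (htd1 : ∀ i : ℤ, Submodule.map Astar (Vs i) ≤ Vs (i-1) ⊔ Vs i ⊔ Vs (i+1))
    (htd2 : ∀ i : ℤ, Submodule.map A (Vst i) ≤ Vst (i-1) ⊔ Vst i ⊔ Vst (i+1))
    (hirr : ∀ W : Submodule 𝕂 V, Submodule.map A W ≤ W → Submodule.map Astar W ≤ W →
      W = ⊥ ∨ W = ⊤)
    (Ws : ℤ → Submodule 𝕂 V)
    (hWout : ∀ i : ℤ, i < 0 ∨ d < i → Ws i = ⊥)
    (hWdef : ∀ i : ℤ, 0 ≤ i → i ≤ d →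
      Ws i = (⨆ j ∈ Finset.Icc (0:ℤ) i, Vst j) ⊓ (⨆ j ∈ Finset.Icc (0:ℤ) (d - i), Vs j))
    (hWtot : (⨆ i ∈ Finset.Icc (0:ℤ) d, Ws i) = ⊤)
    (B : Module.End 𝕂 V)
    (hB : ∀ i : ℤ, 0 ≤ i → i ≤ d → ∀ v ∈ Ws i, B v = q ^ (2*i - d) • v)
    :
    (q - q⁻¹)⁻¹ • (q • (A * B) - q⁻¹ • (B * A)) = (1 : Module.End 𝕂 V) ∧
    (q - q⁻¹)⁻¹ • (q • (B * Astar) - q⁻¹ • (Astar * B)) = B ^ 2 + c • (1 : Module.End 𝕂 V) := by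
  have hW : ∀ i, 0 ≤ i → i ≤ d → Ws i = flag Vst i ⊓ flag Vs (d - i) := hWdef
  -- Outside `0 ≤ i ≤ d` the intersection `flag Vst i ⊓ flag Vs (d - i)` is zero.
  have hB' : ∀ i, ∀ v ∈ flag Vst i ⊓ flag Vs (d - i), B v = q ^ (2 * i - d) • v := by
    intro i v hv
    rcases lt_or_ge i 0 with h | h0
    · rw [flag_of_neg Vst h, bot_inf_eq, Submodule.mem_bot] at hv
      simp [hv]
    rcases lt_or_ge d i with h | h1
    · rw [flag_of_neg Vs (by lia : d - i < 0), inf_bot_eq, Submodule.mem_bot] at hv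
      simp [hv]
    exact hB i h0 h1 v (hW i h0 h1 ▸ hv)
  have hqq : q - q⁻¹ ≠ 0 := by
    intro h
    apply hqru 2 (by norm_num)
    field_simp at h
    linear_combination h
  have hext : ∀ S T : Module.End 𝕂 V,
      (∀ i, 0 ≤ i → i ≤ d → ∀ v ∈ Ws i, S v = T v) → S = T := by
    intro S T h
    have htop : (⊤ : Submodule 𝕂 V) ≤ LinearMap.eqLocus S T := by
      rw [← hWtot]
      exact iSup₂_le fun i hi v hv =>
        h i (Finset.mem_Icc.1 hi).1 (Finset.mem_Icc.1 hi).2 v hv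
    exact LinearMap.ext fun v => htop (Submodule.mem_top (x := v))
  constructor
  · refine hext _ _ fun i h0 h1 v hv => ?_
    have hBv := hB i h0 h1 v hv
    rw [hW i h0 h1] at hv
    obtain ⟨w, hw⟩ : ∃ w, w = A v - q ^ (2 * (d - i) - d) • v := ⟨_, rfl⟩
    have hAv : A v = q ^ (2 * (d - i) - d) • v + w := by rw [hw]; abel
    have hBw : B w = q ^ (2 * (i + 1) - d) • w := by
      refine hB' _ _ ⟨?_, ?_⟩
      · rw [hw]
        exact Submodule.sub_mem _
          (map_mem_flag (fun j hj => hVstout j (Or.inl hj)) htd2 hv.1)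
          (Submodule.smul_mem _ _ (flag_mono Vst (by lia) hv.1))
      · rw [hw, show d - (i + 1) = d - i - 1 by ring]
        exact sub_smul_mem_flag (θ := fun j => q ^ (2 * j - d)) hVeig (by lia) hv.2
    have e1 : q ^ (2 * (d - i) - d) = (q ^ (2 * i - d))⁻¹ := by
      rw [← zpow_neg]; congr 1; ring
    have e2 : q ^ (2 * (i + 1) - d) = q ^ (2 * i - d) * q ^ 2 := by
      rw [show 2 * (i + 1) - d = (2 * i - d) + 2 by ring, zpow_add₀ hq0, zpow_ofNat]
    have hx : q ^ (2 * i - d) ≠ 0 := zpow_ne_zero _ hq0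
    rw [e1] at hAv
    rw [e2] at hBw
    generalize q ^ (2 * i - d) = x at *
    simp only [LinearMap.smul_apply, LinearMap.sub_apply, Module.End.mul_apply, hBv, hAv,
      map_add, map_smul, hBw, Module.End.one_apply]
    rw [inv_smul_eq_iff₀ hqq]
    match_scalars <;> field_simp <;> ring
  · refine hext _ _ fun i h0 h1 v hv => ?_
    have hBv := hB i h0 h1 v hv
    rw [hW i h0 h1] at hv
    obtain ⟨w, hw⟩ : ∃ w, w = Astar v - (q ^ (2 * i - d) + c * q ^ (d - 2 * i)) • v := ⟨_, rfl⟩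
    have hAv : Astar v = (q ^ (2 * i - d) + c * q ^ (d - 2 * i)) • v + w := by rw [hw]; abel
    have hBw : B w = q ^ (2 * (i - 1) - d) • w := by
      refine hB' _ _ ⟨?_, ?_⟩
      · rw [hw]
        exact sub_smul_mem_flag (θ := fun j => q ^ (2 * j - d) + c * q ^ (d - 2 * j))
          hVsteig h1 hv.1
      · rw [hw, show d - (i - 1) = d - i + 1 by ring]
        exact Submodule.sub_mem _
          (map_mem_flag (fun j hj => hVout j (Or.inl hj)) htd1 hv.2)
          (Submodule.smul_mem _ _ (flag_mono Vs (by lia) hv.2))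
    have e1 : q ^ (d - 2 * i) = (q ^ (2 * i - d))⁻¹ := by
      rw [← zpow_neg]; congr 1; ring
    have e2 : q ^ (2 * (i - 1) - d) = q ^ (2 * i - d) / q ^ 2 := by
      rw [show 2 * (i - 1) - d = (2 * i - d) - 2 by ring, zpow_sub₀ hq0, zpow_ofNat]
    have hx : q ^ (2 * i - d) ≠ 0 := zpow_ne_zero _ hq0
    rw [e1] at hAv
    rw [e2] at hBw
    generalize q ^ (2 * i - d) = x at *
    simp only [LinearMap.smul_apply, LinearMap.sub_apply, LinearMap.add_apply, pow_two,
      Module.End.mul_apply, hBv, hAv, map_add, map_smul, hBw, Module.End.one_apply]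
    rw [inv_smul_eq_iff₀ hqq]
    match_scalars <;> field_simp <;> ring
end

section
/- For 0 ≤ i ≤ d, (Ã* − q^{d−2i}·I) W_i ⊆ W_{i−1}. -/
/-!
On `W_i` the map `B` acts as `q^{2i-d}`, so there `At - q^{d-2i}` agrees with `c⁻¹ (A* - θ*_i)`,
where `θ*_i = q^{2i-d} + c q^{d-2i}`. Now `A* - θ*_i` sends `V*_0 + ⋯ + V*_i` into
`V*_0 + ⋯ + V*_{i-1}`, since it kills `V*_i` and preserves the other eigenspaces
(`sub_smul_mem_flag`), and it sends `V_0 + ⋯ + V_{d-i}` into `V_0 + ⋯ + V_{d-i+1}` by the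
tridiagonal relation (`map_flag_le`). The intersection of the two targets is `W_{i-1}`; for `i = 0`
the first target is already zero.
-/

/-- A map acting on each `U j`, `0 ≤ j ≤ i`, as the scalar `t j` satisfies
`(T - t i)(U 0 + ⋯ + U i) ⊆ U 0 + ⋯ + U (i - 1)`. -/
theorem sub_smul_mem_flag_s2 {𝕂 V : Type*} [Field 𝕂] [AddCommGroup V] [Module 𝕂 V]
    (T : Module.End 𝕂 V) (U : ℤ → Submodule 𝕂 V) (t : ℤ → 𝕂) (i : ℤ)
    (h : ∀ j, 0 ≤ j → j ≤ i → ∀ v ∈ U j, T v = t j • v)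
    {v : V} (hv : v ∈ ⨆ j ∈ Finset.Icc (0:ℤ) i, U j) :
    T v - t i • v ∈ ⨆ j ∈ Finset.Icc (0:ℤ) (i - 1), U j := by
  have key : (⨆ j ∈ Finset.Icc (0:ℤ) i, U j) ≤
      (⨆ j ∈ Finset.Icc (0:ℤ) (i - 1), U j).comap (T - t i • (1 : Module.End 𝕂 V)) := by
    refine iSup₂_le fun j hj u hu => ?_
    obtain ⟨h0, hi⟩ := Finset.mem_Icc.mp hj
    have hu' : (T - t i • (1 : Module.End 𝕂 V)) u = (t j - t i) • u := by
      simp [h j h0 hi u hu, sub_smul]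
    rw [Submodule.mem_comap, hu']
    rcases eq_or_lt_of_le hi with rfl | hlt
    · simp
    · exact Submodule.smul_mem _ _ <|
        Submodule.mem_iSup_of_mem j <| Submodule.mem_iSup_of_mem
          (Finset.mem_Icc.mpr ⟨h0, by lia⟩) hu
  simpa using key hv

/-- A map that moves each `U j` into `U (j - 1) + U j + U (j + 1)`, where `U` vanishes at negative
indices, raises the flag `U 0 + ⋯ + U k` by at most one step. -/
theorem map_flag_le {𝕂 V : Type*} [Field 𝕂] [AddCommGroup V] [Module 𝕂 V]
    (T : Module.End 𝕂 V) (U : ℤ → Submodule 𝕂 V) (k : ℤ)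
    (hneg : ∀ j, j < 0 → U j = ⊥)
    (h : ∀ j, Submodule.map T (U j) ≤ U (j - 1) ⊔ U j ⊔ U (j + 1)) :
    Submodule.map T (⨆ j ∈ Finset.Icc (0:ℤ) k, U j) ≤
      ⨆ j ∈ Finset.Icc (0:ℤ) (k + 1), U j := by
  have le_flag : ∀ m, m ≤ k + 1 → U m ≤ ⨆ j ∈ Finset.Icc (0:ℤ) (k + 1), U j := by
    intro m hm
    rcases lt_or_ge m 0 with h0 | h0
    · simp [hneg m h0]
    · exact le_iSup₂_of_le m (Finset.mem_Icc.mpr ⟨h0, hm⟩) le_rfl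
  rw [Submodule.map_le_iff_le_comap]
  refine iSup₂_le fun j hj => ?_
  rw [← Submodule.map_le_iff_le_comap]
  obtain ⟨h0, hk⟩ := Finset.mem_Icc.mp hj
  exact (h j).trans (sup_le (sup_le (le_flag _ (by lia)) (le_flag _ (by lia)))
    (le_flag _ (by lia)))


theorem stmt_2
    {𝕂 : Type*} [Field 𝕂] [IsAlgClosed 𝕂]
    {V : Type*} [AddCommGroup V] [Module 𝕂 V] [FiniteDimensional 𝕂 V]
    (hV : 0 < Module.finrank 𝕂 V)
    {q : 𝕂} (hq0 : q ≠ 0) (hqru : ∀ n : ℕ, 0 < n → q ^ n ≠ 1)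
    {c : 𝕂} (hc : c ≠ 0)
    (A Astar : Module.End 𝕂 V)
    (d : ℤ) (hd : 0 ≤ d)
    (Vs Vst : ℤ → Submodule 𝕂 V)
    (hVout : ∀ i : ℤ, i < 0 ∨ d < i → Vs i = ⊥)
    (hVstout : ∀ i : ℤ, i < 0 ∨ d < i → Vst i = ⊥)
    (hVeig : ∀ i : ℤ, 0 ≤ i → i ≤ d → Vs i = Module.End.eigenspace A (q ^ (2*i - d)))
    (hVne : ∀ i : ℤ, 0 ≤ i → i ≤ d → Vs i ≠ ⊥)
    (hVtot : (⨆ i ∈ Finset.Icc (0:ℤ) d, Vs i) = ⊤)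
    (hVsteig : ∀ i : ℤ, 0 ≤ i → i ≤ d →
      Vst i = Module.End.eigenspace Astar (q ^ (2*i - d) + c * q ^ (d - 2*i)))
    (hVstne : ∀ i : ℤ, 0 ≤ i → i ≤ d → Vst i ≠ ⊥)
    (hVsttot : (⨆ i ∈ Finset.Icc (0:ℤ) d, Vst i) = ⊤)
    (htd1 : ∀ i : ℤ, Submodule.map Astar (Vs i) ≤ Vs (i-1) ⊔ Vs i ⊔ Vs (i+1))
    (htd2 : ∀ i : ℤ, Submodule.map A (Vst i) ≤ Vst (i-1) ⊔ Vst i ⊔ Vst (i+1))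
    (hirr : ∀ W : Submodule 𝕂 V, Submodule.map A W ≤ W → Submodule.map Astar W ≤ W →
      W = ⊥ ∨ W = ⊤)
    (Ws : ℤ → Submodule 𝕂 V)
    (hWout : ∀ i : ℤ, i < 0 ∨ d < i → Ws i = ⊥)
    (hWdef : ∀ i : ℤ, 0 ≤ i → i ≤ d →
      Ws i = (⨆ j ∈ Finset.Icc (0:ℤ) i, Vst j) ⊓ (⨆ j ∈ Finset.Icc (0:ℤ) (d - i), Vs j))
    (hWtot : (⨆ i ∈ Finset.Icc (0:ℤ) d, Ws i) = ⊤)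
    (B : Module.End 𝕂 V)
    (hB : ∀ i : ℤ, 0 ≤ i → i ≤ d → ∀ v ∈ Ws i, B v = q ^ (2*i - d) • v)
    (At : Module.End 𝕂 V)
    (hAt : At = c⁻¹ • (Astar - B))
    :
    ∀ i : ℤ, 0 ≤ i → i ≤ d →
      Submodule.map (At - q ^ (d - 2*i) • (1 : Module.End 𝕂 V)) (Ws i) ≤ Ws (i - 1) := by
  rintro i h0 hi _ ⟨w, hw, rfl⟩
  have hw' := hw
  rw [SetLike.mem_coe, hWdef i h0 hi] at hw'
  obtain ⟨hw1, hw2⟩ := Submodule.mem_inf.mp hw'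
  have hAtw : (At - q ^ (d - 2*i) • (1 : Module.End 𝕂 V)) w =
      c⁻¹ • (Astar w - (q ^ (2*i - d) + c * q ^ (d - 2*i)) • w) := by
    simp only [hAt, LinearMap.sub_apply, LinearMap.smul_apply, Module.End.one_apply,
      hB i h0 hi w hw]
    rw [add_smul, ← sub_sub, smul_sub c⁻¹ (_ - _), smul_smul c⁻¹ (c * _), inv_mul_cancel_left₀ hc]
  rw [hAtw]
  refine Submodule.smul_mem _ _ ?_
  have m1 := sub_smul_mem_flag_s2 Astar Vst (fun j => q ^ (2*j - d) + c * q ^ (d - 2*j)) i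
    (fun j hj0 hji v hv => by
      rw [hVsteig j hj0 (hji.trans hi)] at hv
      exact Module.End.mem_eigenspace_iff.mp hv) hw1
  rcases eq_or_lt_of_le h0 with rfl | hpos
  · rw [hWout _ (Or.inl (by lia))]
    simpa using m1
  · rw [hWdef (i - 1) (by lia) (by lia)]
    refine Submodule.mem_inf.mpr ⟨m1, ?_⟩
    rw [show d - (i - 1) = d - i + 1 by ring]
    refine Submodule.sub_mem _
      (map_flag_le Astar Vs (d - i) (fun j hj => hVout j (Or.inl hj)) htd1
        (Submodule.mem_map_of_mem hw2)) (Submodule.smul_mem _ _ ?_)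
    have hmono : (⨆ j ∈ Finset.Icc (0:ℤ) (d - i), Vs j) ≤
        ⨆ j ∈ Finset.Icc (0:ℤ) (d - i + 1), Vs j :=
      biSup_mono fun j hj => by rw [Finset.mem_Icc] at hj ⊢; lia
    exact hmono hw2
end

section
/- The linear maps B and Ã* satisfy (qBÃ* − q⁻¹Ã*B)/(q − q⁻¹) = I. -/
/-!
On `Ws i` the map `B` is the scalar `b = q ^ (2 * i - d)`, while `Astar - (b + c * b⁻¹)` sends
`Ws i` into `Ws (i - 1)`: it kills the top summand `Vst i` of the first flag
(`eigenflag_lower`), and it raises the index of the second flag by at most one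
(`flag_raise`). Hence `At = b⁻¹ + L` on `Ws i`, where `L` takes values in the
`q ^ (-2) * b`-eigenspace of `B`. The lowering part therefore contributes
`q * (q ^ (-2) * b) - q⁻¹ * b = 0` to `q B At - q⁻¹ At B`, and the scalar part contributes
`q - q⁻¹`. Since the `Ws i` span `V`, the relation follows.
-/

/-- If every `U j` lies in the `t j`-eigenspace of `f`, then `f - t i` maps `U 0 + ⋯ + U i` into
`U 0 + ⋯ + U (i - 1)`. For `i = 0` the target is an empty supremum, hence zero. -/
theorem eigenflag_lower {K V : Type*} [Field K] [AddCommGroup V] [Module K V]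
    (f : Module.End K V) (U : ℤ → Submodule K V) (t : ℤ → K) (i : ℤ)
    (h : ∀ j, 0 ≤ j → j ≤ i → ∀ v ∈ U j, f v = t j • v)
    {w : V} (hw : w ∈ ⨆ j ∈ Finset.Icc (0:ℤ) i, U j) :
    f w - t i • w ∈ ⨆ j ∈ Finset.Icc (0:ℤ) (i - 1), U j := by
  have key : (⨆ j ∈ Finset.Icc (0:ℤ) i, U j) ≤
      (⨆ j ∈ Finset.Icc (0:ℤ) (i - 1), U j).comap (f - t i • (1 : Module.End K V)) := by
    refine iSup₂_le fun j hj v hv => ?_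
    rw [Finset.mem_Icc] at hj
    have e : (f - t i • (1 : Module.End K V)) v = (t j - t i) • v := by
      simp [h j hj.1 hj.2 v hv, sub_smul]
    rw [Submodule.mem_comap, e]
    rcases eq_or_lt_of_le hj.2 with rfl | hlt
    · simp
    · exact Submodule.smul_mem _ _ (Submodule.mem_iSup_of_mem j
        (Submodule.mem_iSup_of_mem (Finset.mem_Icc.2 ⟨hj.1, by omega⟩) hv))
  simpa using key hw

/-- A map that acts tridiagonally on the `U j` sends `U 0 + ⋯ + U k` into
`U 0 + ⋯ + U (k + 1)`. -/
theorem flag_raise {K V : Type*} [Field K] [AddCommGroup V] [Module K V]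
    (f : Module.End K V) (U : ℤ → Submodule K V) (k : ℤ)
    (hneg : ∀ j : ℤ, j < 0 → U j = ⊥)
    (h : ∀ j, Submodule.map f (U j) ≤ U (j - 1) ⊔ U j ⊔ U (j + 1))
    {w : V} (hw : w ∈ ⨆ j ∈ Finset.Icc (0:ℤ) k, U j) :
    f w ∈ ⨆ j ∈ Finset.Icc (0:ℤ) (k + 1), U j := by
  have sub : ∀ j, j ≤ k + 1 → U j ≤ ⨆ j ∈ Finset.Icc (0:ℤ) (k + 1), U j := by
    intro j hj
    rcases lt_or_ge j 0 with h0 | h0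
    · rw [hneg j h0]; exact bot_le
    · exact le_iSup₂_of_le j (Finset.mem_Icc.2 ⟨h0, hj⟩) le_rfl
  have key : (⨆ j ∈ Finset.Icc (0:ℤ) k, U j) ≤
      (⨆ j ∈ Finset.Icc (0:ℤ) (k + 1), U j).comap f := by
    refine iSup₂_le fun j hj => ?_
    rw [Finset.mem_Icc] at hj
    rw [← Submodule.map_le_iff_le_comap]
    exact (h j).trans (sup_le (sup_le (sub _ (by omega)) (sub _ (by omega))) (sub _ (by omega)))
  exact key hw

theorem stmt_3
    {𝕂 : Type*} [Field 𝕂] [IsAlgClosed 𝕂]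
    {V : Type*} [AddCommGroup V] [Module 𝕂 V] [FiniteDimensional 𝕂 V]
    (hV : 0 < Module.finrank 𝕂 V)
    {q : 𝕂} (hq0 : q ≠ 0) (hqru : ∀ n : ℕ, 0 < n → q ^ n ≠ 1)
    {c : 𝕂} (hc : c ≠ 0)
    (A Astar : Module.End 𝕂 V)
    (d : ℤ) (hd : 0 ≤ d)
    (Vs Vst : ℤ → Submodule 𝕂 V)
    (hVout : ∀ i : ℤ, i < 0 ∨ d < i → Vs i = ⊥)
    (hVstout : ∀ i : ℤ, i < 0 ∨ d < i → Vst i = ⊥)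
    (hVeig : ∀ i : ℤ, 0 ≤ i → i ≤ d → Vs i = Module.End.eigenspace A (q ^ (2*i - d)))
    (hVne : ∀ i : ℤ, 0 ≤ i → i ≤ d → Vs i ≠ ⊥)
    (hVtot : (⨆ i ∈ Finset.Icc (0:ℤ) d, Vs i) = ⊤)
    (hVsteig : ∀ i : ℤ, 0 ≤ i → i ≤ d →
      Vst i = Module.End.eigenspace Astar (q ^ (2*i - d) + c * q ^ (d - 2*i)))
    (hVstne : ∀ i : ℤ, 0 ≤ i → i ≤ d → Vst i ≠ ⊥)
    (hVsttot : (⨆ i ∈ Finset.Icc (0:ℤ) d, Vst i) = ⊤)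
    (htd1 : ∀ i : ℤ, Submodule.map Astar (Vs i) ≤ Vs (i-1) ⊔ Vs i ⊔ Vs (i+1))
    (htd2 : ∀ i : ℤ, Submodule.map A (Vst i) ≤ Vst (i-1) ⊔ Vst i ⊔ Vst (i+1))
    (hirr : ∀ W : Submodule 𝕂 V, Submodule.map A W ≤ W → Submodule.map Astar W ≤ W →
      W = ⊥ ∨ W = ⊤)
    (Ws : ℤ → Submodule 𝕂 V)
    (hWout : ∀ i : ℤ, i < 0 ∨ d < i → Ws i = ⊥)
    (hWdef : ∀ i : ℤ, 0 ≤ i → i ≤ d →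
      Ws i = (⨆ j ∈ Finset.Icc (0:ℤ) i, Vst j) ⊓ (⨆ j ∈ Finset.Icc (0:ℤ) (d - i), Vs j))
    (hWtot : (⨆ i ∈ Finset.Icc (0:ℤ) d, Ws i) = ⊤)
    (B : Module.End 𝕂 V)
    (hB : ∀ i : ℤ, 0 ≤ i → i ≤ d → ∀ v ∈ Ws i, B v = q ^ (2*i - d) • v)
    (At : Module.End 𝕂 V)
    (hAt : At = c⁻¹ • (Astar - B))
    :
    (q - q⁻¹)⁻¹ • (q • (B * At) - q⁻¹ • (At * B)) = (1 : Module.End 𝕂 V) := by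
  have hq2 : q - q⁻¹ ≠ 0 := by
    intro h
    refine hqru 2 (by norm_num) ?_
    field_simp at h
    linear_combination h
  -- Comparing the two sides on each `Ws i` suffices, as these span `V`.
  have hle : (⨆ i ∈ Finset.Icc (0:ℤ) d, Ws i) ≤
      LinearMap.eqLocus ((q - q⁻¹)⁻¹ • (q • (B * At) - q⁻¹ • (At * B))) (1 : Module.End 𝕂 V) := by
    refine iSup₂_le fun i hi w hw => ?_
    obtain ⟨hi0, hid⟩ := Finset.mem_Icc.1 hi
    have hw' := hw
    rw [hWdef i hi0 hid] at hw'
    obtain ⟨hw1, hw2⟩ := hw'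
    have hlow := eigenflag_lower Astar Vst (fun j => q ^ (2*j - d) + c * q ^ (d - 2*j)) i
      (fun j hj0 hji v hv => by
        rw [hVsteig j hj0 (hji.trans hid)] at hv
        exact Module.End.mem_eigenspace_iff.1 hv) hw1
    have hup := flag_raise Astar Vs (d - i) (fun j hj => hVout j (Or.inl hj)) htd1 hw2
    have hstay : w ∈ ⨆ j ∈ Finset.Icc (0:ℤ) (d - i + 1), Vs j :=
      SetLike.le_def.1 (biSup_mono (p := fun j => j ∈ Finset.Icc (0:ℤ) (d - i))
        (fun j hj => Finset.Icc_subset_Icc_right (by omega) hj)) hw2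
    obtain ⟨u, hu⟩ : ∃ u, u = Astar w - (q ^ (2*i - d) + c * q ^ (d - 2*i)) • w := ⟨_, rfl⟩
    have hBu : B u = q ^ (2*(i-1) - d) • u := by
      rcases eq_or_lt_of_le hi0 with rfl | hpos
      · -- `Ws (-1)` is zero, so there is nothing below `Ws 0`.
        have : u = 0 := by
          rw [hu]
          simpa using hlow
        simp [this]
      · refine hB (i - 1) (by omega) (by omega) u ?_
        rw [hWdef (i - 1) (by omega) (by omega), hu]
        refine ⟨hlow, ?_⟩
        rw [show d - (i - 1) = d - i + 1 by ring]
        exact Submodule.sub_mem _ hup (Submodule.smul_mem _ _ hstay)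
    have hBw := hB i hi0 hid w hw
    have hb : q ^ (2*i - d) ≠ 0 := zpow_ne_zero _ hq0
    have e1 : q ^ (d - 2*i) = (q ^ (2*i - d))⁻¹ := by
      rw [← zpow_neg]; congr 1; ring
    have e2 : q ^ (2*(i-1) - d) = q ^ (2*i - d) * (q⁻¹ * q⁻¹) := by
      rw [show 2*(i-1) - d = (2*i - d) + (-1) + (-1) by ring, zpow_add₀ hq0, zpow_add₀ hq0,
        zpow_neg_one, mul_assoc]
    rw [e2] at hBu
    rw [e1] at hu
    generalize q ^ (2*i - d) = b at *
    have hAw : Astar w = u + (b + c * b⁻¹) • w := by rw [hu]; abel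
    have hAtw : At w = c⁻¹ • u + b⁻¹ • w := by
      rw [hAt]
      simp only [LinearMap.smul_apply, LinearMap.sub_apply, hAw, hBw]
      match_scalars <;> field_simp
      ring
    rw [LinearMap.mem_eqLocus]
    simp only [LinearMap.smul_apply, LinearMap.sub_apply, Module.End.mul_apply,
      Module.End.one_apply, hBw, map_smul, hAtw, map_add, hBu]
    rw [inv_smul_eq_iff₀ hq2]
    match_scalars <;> field_simp <;> ring
  rw [hWtot] at hle
  exact LinearMap.ext fun v => hle (Submodule.mem_top (x := v))
end

section
/- The linear map Ã* is diagonalizable, its set of distinct eigenvalues is {q^{d−2i} : 0 ≤ i ≤ d}, and for 0 ≤ i ≤ d the dimension of the eigenspace of Ã* for the eigenvalue q^{d−2i} equals the dimension of W_i. -/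
/-!
On `W i` the map `A` acts as `q ^ (d - 2i)` plus a map into `W (i + 1)`, and `Astar` acts as
`q ^ (2i - d) + c q ^ (d - 2i)` plus a map into `W (i - 1)`. Since `B` is `q ^ (2i - d)` on `W i`,
`At` acts there as `q ^ (d - 2i)` plus a map into `W (i - 1)`. So `At` is block triangular with
respect to `W 0, …, W d`, with pairwise distinct scalars on the diagonal; such a map is
diagonalizable and its eigenspaces have the dimensions of the blocks (`psum_eq_psum_eigenspace`,
`finrank_eigenspace_eq`).

It remains to see that no `W i` vanishes. The ends are `W 0 = Vst 0` and `W d = Vs 0`, both nonzero.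
If `W i = 0` for some `0 < i`, then `W 0 + ⋯ + W (i - 1)` is invariant under `A` and `Astar`
and contains `W 0`, so it is everything by irreducibility; but it meets `W d` trivially.
-/

/-! ### Block triangular maps with distinct diagonal scalars -/

section Triangular

variable {K V : Type*} [Field K] [AddCommGroup V] [Module K V]

/-- The partial sum `W 0 + ⋯ + W k` of a family of subspaces; it is `⊥` for negative `k`. -/
def psum (W : ℤ → Submodule K V) (k : ℤ) : Submodule K V :=
  ⨆ j ∈ Finset.Icc (0 : ℤ) k, W j

lemma psum_le {W : ℤ → Submodule K V} {k : ℤ} {N : Submodule K V}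
    (h : ∀ j, 0 ≤ j → j ≤ k → W j ≤ N) : psum W k ≤ N := by
  refine iSup₂_le fun j hj => ?_
  rw [Finset.mem_Icc] at hj
  exact h j hj.1 hj.2

lemma le_psum (W : ℤ → Submodule K V) {j k : ℤ} (h0 : 0 ≤ j) (hk : j ≤ k) : W j ≤ psum W k :=
  le_iSup₂_of_le j (Finset.mem_Icc.2 ⟨h0, hk⟩) le_rfl

lemma psum_mono (W : ℤ → Submodule K V) {k l : ℤ} (h : k ≤ l) : psum W k ≤ psum W l :=
  psum_le fun _ h0 hk => le_psum W h0 (hk.trans h)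

lemma psum_neg (W : ℤ → Submodule K V) {k : ℤ} (h : k < 0) : psum W k = ⊥ :=
  le_bot_iff.1 (psum_le fun j h0 hk => by omega)

lemma psum_zero (W : ℤ → Submodule K V) : psum W 0 = W 0 :=
  le_antisymm (psum_le fun j h0 hk => by rw [le_antisymm hk h0]) (le_psum W le_rfl le_rfl)

lemma psum_step (W : ℤ → Submodule K V) {k : ℤ} (h : 0 ≤ k) :
    psum W k = psum W (k - 1) ⊔ W k := by
  apply le_antisymm
  · refine psum_le fun j h0 hk => ?_
    rcases hk.lt_or_eq with hk | rfl
    · exact (le_psum W h0 (by omega)).trans le_sup_left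
    · exact le_sup_right
  · exact sup_le (psum_mono W (by omega)) (le_psum W h le_rfl)

/-- `T` is triangular with respect to `W 0, …, W d`, with scalar `l j` as diagonal block on `W j`. -/
def IsTri (T : Module.End K V) (l : ℤ → K) (W : ℤ → Submodule K V) (d : ℤ) : Prop :=
  ∀ j, 0 ≤ j → j ≤ d → ∀ x ∈ W j, T x - l j • x ∈ psum W (j - 1)

lemma IsTri.of_scalar {T : Module.End K V} {l : ℤ → K} {W : ℤ → Submodule K V} {d : ℤ}
    (h : ∀ j, 0 ≤ j → j ≤ d → ∀ x ∈ W j, T x = l j • x) : IsTri T l W d := by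
  intro j h0 hd x hx
  rw [h j h0 hd x hx, sub_self]
  exact zero_mem _

lemma IsTri.sub_mem {T : Module.End K V} {l : ℤ → K} {W : ℤ → Submodule K V} {d : ℤ}
    (h : IsTri T l W d) {k : ℤ} (hk : k ≤ d) {x : V} (hx : x ∈ psum W k) :
    T x - l k • x ∈ psum W (k - 1) := by
  suffices hle : psum W k ≤ (psum W (k - 1)).comap (T - l k • (1 : Module.End K V)) by
    simpa using hle hx
  refine psum_le fun j h0 hj y hy => ?_
  have h1 := h j h0 (hj.trans hk) y hy
  rcases hj.lt_or_eq with hj | rfl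
  · have h2 : (l j - l k) • y ∈ psum W (k - 1) :=
      Submodule.smul_mem _ _ (le_psum W h0 (by omega) hy)
    have h3 := add_mem (psum_mono W (show j - 1 ≤ k - 1 by omega) h1) h2
    have h4 : T y - l j • y + (l j - l k) • y = T y - l k • y := by module
    rw [h4] at h3
    simpa using h3
  · simpa using h1

/-- An eigenvector for `l j` lying in a partial sum of index `≠ j` lies in the previous one. -/
lemma IsTri.descend {T : Module.End K V} {l : ℤ → K} {W : ℤ → Submodule K V} {d : ℤ}
    (h : IsTri T l W d) (hl : ∀ i j, l i = l j → i = j) {j k : ℤ} (hk : k ≤ d) (hjk : j ≠ k)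
    {x : V} (hT : T x = l j • x) (hx : x ∈ psum W k) : x ∈ psum W (k - 1) := by
  have h1 := h.sub_mem hk hx
  rw [hT, ← sub_smul] at h1
  exact (Submodule.smul_mem_iff _ (sub_ne_zero.2 fun e => hjk (hl _ _ e))).1 h1

lemma IsTri.disjoint {T : Module.End K V} {l : ℤ → K} {W : ℤ → Submodule K V} {d : ℤ}
    (h : IsTri T l W d) (hl : ∀ i j, l i = l j → i = j) {j : ℤ} (hj : j ≤ d) :
    Disjoint (psum W (j - 1)) (Module.End.eigenspace T (l j)) := by
  rw [Submodule.disjoint_def]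
  intro x hx hE
  rw [Module.End.mem_eigenspace_iff] at hE
  have key : ∀ n : ℕ, x ∈ psum W (j - 1 - n) := by
    intro n
    induction n with
    | zero => simpa using hx
    | succ n ih =>
      have := h.descend hl (show j - 1 - (n : ℤ) ≤ d by omega) (by omega) hE ih
      convert this using 2
      push_cast
      ring
  have h1 := key j.toNat
  rw [psum_neg W (by omega)] at h1
  simpa using h1

lemma IsTri.eigenspace_le {T : Module.End K V} {l : ℤ → K} {W : ℤ → Submodule K V} {d : ℤ}
    (h : IsTri T l W d) (hl : ∀ i j, l i = l j → i = j) (htop : psum W d = ⊤) {j : ℤ}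
    (hj : j ≤ d) : Module.End.eigenspace T (l j) ≤ psum W j := by
  intro x hE
  rw [Module.End.mem_eigenspace_iff] at hE
  have key : ∀ n : ℕ, (n : ℤ) ≤ d - j → x ∈ psum W (d - n) := by
    intro n
    induction n with
    | zero => intro _; simp [htop]
    | succ n ih =>
      intro hn
      push_cast at hn
      have := h.descend hl (show d - (n : ℤ) ≤ d by omega) (by omega) hE (ih (by omega))
      convert this using 2
      push_cast
      ring
  have h1 := key (d - j).toNat (by omega)
  convert h1 using 2
  omega

/-- For a triangular map with distinct diagonal scalars, the flag of the blocks is also the flag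
of the eigenspaces. -/
lemma IsTri.psum_eq_psum_eigenspace {T : Module.End K V} {l : ℤ → K} {W : ℤ → Submodule K V}
    {d : ℤ} (h : IsTri T l W d) (hl : ∀ i j, l i = l j → i = j) (htop : psum W d = ⊤) {k : ℤ}
    (hk : k ≤ d) : psum W k = psum (fun j => Module.End.eigenspace T (l j)) k := by
  apply le_antisymm
  · suffices key : ∀ n : ℕ, (n : ℤ) - 1 ≤ d →
        psum W ((n : ℤ) - 1) ≤ psum (fun j => Module.End.eigenspace T (l j)) ((n : ℤ) - 1) by
      rcases lt_or_ge k 0 with hneg | hpos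
      · simp [psum_neg W hneg]
      · have := key (k + 1).toNat (by omega)
        rwa [show (((k + 1).toNat : ℕ) : ℤ) - 1 = k by omega] at this
    intro n
    induction n with
    | zero => intro _; rw [psum_neg W (by simp)]; exact bot_le
    | succ n ih =>
      intro hn
      push_cast at hn ⊢
      rw [add_sub_cancel_right] at hn ⊢
      set E := fun j => Module.End.eigenspace T (l j) with hEdef
      have ih' := ih (by omega)
      rw [psum_step W (by omega)]
      refine sup_le (ih'.trans (psum_mono E (by omega))) fun w hw => ?_
      -- `T - l n` maps the sum of the earlier eigenspaces onto itself, so `w` can be corrected by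
      -- an element of that sum to an eigenvector for `l n`.
      have hsurj : psum E ((n : ℤ) - 1) ≤
          (psum E ((n : ℤ) - 1)).map (T - l n • (1 : Module.End K V)) := by
        refine psum_le fun j h0 hj u hu => ?_
        have hne : l j - l n ≠ 0 := sub_ne_zero.2 fun e => by have := hl _ _ e; omega
        refine ⟨(l j - l n)⁻¹ • u, Submodule.smul_mem _ _ (le_psum E h0 hj hu), ?_⟩
        have hu' : T u = l j • u := Module.End.mem_eigenspace_iff.1 hu
        rw [map_smul, LinearMap.sub_apply, LinearMap.smul_apply, Module.End.one_apply, hu',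
          ← sub_smul, smul_smul, inv_mul_cancel₀ hne, one_smul]
      obtain ⟨u, hu, hTu⟩ := hsurj (ih' (h n (by omega) hn w hw))
      have hwu : w - u ∈ E n := by
        rw [hEdef, Module.End.mem_eigenspace_iff, map_sub]
        rw [LinearMap.sub_apply, LinearMap.smul_apply, Module.End.one_apply] at hTu
        rw [smul_sub, sub_eq_sub_iff_sub_eq_sub, ← hTu]
      have := add_mem (le_psum E (by omega) le_rfl hwu)
        (psum_mono E (show (n : ℤ) - 1 ≤ n by omega) hu)
      rwa [sub_add_cancel] at this
  · exact psum_le fun j _ hj =>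
      (h.eigenspace_le hl htop (hj.trans hk)).trans (psum_mono W hj)

lemma IsTri.finrank_eigenspace_eq [FiniteDimensional K V] {T : Module.End K V} {l : ℤ → K}
    {W : ℤ → Submodule K V} {d : ℤ} (h : IsTri T l W d) (hl : ∀ i j, l i = l j → i = j)
    (htop : psum W d = ⊤) {k : ℤ} (h0 : 0 ≤ k) (hk : k ≤ d)
    (hdisj : Disjoint (psum W (k - 1)) (W k)) :
    Module.finrank K (Module.End.eigenspace T (l k)) = Module.finrank K (W k) := by
  have e1 := Submodule.finrank_sup_add_finrank_inf_eq (psum W (k - 1)) (W k)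
  have e2 := Submodule.finrank_sup_add_finrank_inf_eq (psum W (k - 1))
    (Module.End.eigenspace T (l k))
  have e3 : psum W (k - 1) ⊔ W k = psum W (k - 1) ⊔ Module.End.eigenspace T (l k) := by
    rw [← psum_step W h0, h.psum_eq_psum_eigenspace hl htop hk, psum_step _ h0,
      ← h.psum_eq_psum_eigenspace hl htop (by omega)]
  rw [hdisj.eq_bot, finrank_bot, e3] at e1
  rw [(h.disjoint hl hk).eq_bot, finrank_bot] at e2
  omega

lemma psum_tridiagonal {T : Module.End K V} {W : ℤ → Submodule K V} (hneg : ∀ i < 0, W i = ⊥)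
    (h : ∀ i, Submodule.map T (W i) ≤ W (i - 1) ⊔ W i ⊔ W (i + 1)) {k : ℤ} {x : V}
    (hx : x ∈ psum W k) : T x ∈ psum W (k + 1) := by
  suffices hle : psum W k ≤ (psum W (k + 1)).comap T from hle hx
  refine psum_le fun j h0 hj => Submodule.map_le_iff_le_comap.1 ((h j).trans ?_)
  refine sup_le (sup_le ?_ (le_psum W h0 (by omega))) (le_psum W (by omega) (by omega))
  rcases lt_or_ge (j - 1) 0 with hlt | hge
  · simp [hneg _ hlt]
  · exact le_psum W hge (by omega)

end Triangular

/-! ### The tridiagonal pair and its split decomposition -/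

lemma zpow_injective_of_not_rootOfUnity {K : Type*} [Field K] {q : K} (hq0 : q ≠ 0)
    (hq : ∀ n : ℕ, 0 < n → q ^ n ≠ 1) {a b : ℤ} (h : q ^ a = q ^ b) : a = b := by
  by_contra hne
  wlog hlt : b < a generalizing a b
  · exact this h.symm (Ne.symm hne) (by omega)
  refine hq (a - b).toNat (by omega) ?_
  rw [← zpow_natCast, Int.toNat_of_nonneg (by omega), zpow_sub₀ hq0, h,
    div_self (zpow_ne_zero _ hq0)]

theorem stmt_4
    {𝕂 : Type*} [Field 𝕂] [IsAlgClosed 𝕂]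
    {V : Type*} [AddCommGroup V] [Module 𝕂 V] [FiniteDimensional 𝕂 V]
    (hV : 0 < Module.finrank 𝕂 V)
    {q : 𝕂} (hq0 : q ≠ 0) (hqru : ∀ n : ℕ, 0 < n → q ^ n ≠ 1)
    {c : 𝕂} (hc : c ≠ 0)
    (A Astar : Module.End 𝕂 V)
    (d : ℤ) (hd : 0 ≤ d)
    (Vs Vst : ℤ → Submodule 𝕂 V)
    (hVout : ∀ i : ℤ, i < 0 ∨ d < i → Vs i = ⊥)
    (hVstout : ∀ i : ℤ, i < 0 ∨ d < i → Vst i = ⊥)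
    (hVeig : ∀ i : ℤ, 0 ≤ i → i ≤ d → Vs i = Module.End.eigenspace A (q ^ (2*i - d)))
    (hVne : ∀ i : ℤ, 0 ≤ i → i ≤ d → Vs i ≠ ⊥)
    (hVtot : (⨆ i ∈ Finset.Icc (0:ℤ) d, Vs i) = ⊤)
    (hVsteig : ∀ i : ℤ, 0 ≤ i → i ≤ d →
      Vst i = Module.End.eigenspace Astar (q ^ (2*i - d) + c * q ^ (d - 2*i)))
    (hVstne : ∀ i : ℤ, 0 ≤ i → i ≤ d → Vst i ≠ ⊥)
    (hVsttot : (⨆ i ∈ Finset.Icc (0:ℤ) d, Vst i) = ⊤)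
    (htd1 : ∀ i : ℤ, Submodule.map Astar (Vs i) ≤ Vs (i-1) ⊔ Vs i ⊔ Vs (i+1))
    (htd2 : ∀ i : ℤ, Submodule.map A (Vst i) ≤ Vst (i-1) ⊔ Vst i ⊔ Vst (i+1))
    (hirr : ∀ W : Submodule 𝕂 V, Submodule.map A W ≤ W → Submodule.map Astar W ≤ W →
      W = ⊥ ∨ W = ⊤)
    (Ws : ℤ → Submodule 𝕂 V)
    (hWout : ∀ i : ℤ, i < 0 ∨ d < i → Ws i = ⊥)
    (hWdef : ∀ i : ℤ, 0 ≤ i → i ≤ d →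
      Ws i = (⨆ j ∈ Finset.Icc (0:ℤ) i, Vst j) ⊓ (⨆ j ∈ Finset.Icc (0:ℤ) (d - i), Vs j))
    (hWtot : (⨆ i ∈ Finset.Icc (0:ℤ) d, Ws i) = ⊤)
    (B : Module.End 𝕂 V)
    (hB : ∀ i : ℤ, 0 ≤ i → i ≤ d → ∀ v ∈ Ws i, B v = q ^ (2*i - d) • v)
    (At : Module.End 𝕂 V)
    (hAt : At = c⁻¹ • (Astar - B))
    :
    (⨆ i ∈ Finset.Icc (0:ℤ) d, Module.End.eigenspace At (q ^ (d - 2*i))) = ⊤ ∧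
    (∀ i : ℤ, 0 ≤ i → i ≤ d → Module.End.eigenspace At (q ^ (d - 2*i)) ≠ ⊥) ∧
    (∀ i : ℤ, 0 ≤ i → i ≤ d →
      Module.finrank 𝕂 (Module.End.eigenspace At (q ^ (d - 2*i))) = Module.finrank 𝕂 (Ws i)) := by
  change psum Vs d = ⊤ at hVtot
  change psum Vst d = ⊤ at hVsttot
  change psum Ws d = ⊤ at hWtot
  -- Outside `[0, d]` one of the two partial sums is `⊥`, so the formula for `Ws` holds everywhere.
  have hW : ∀ i, Ws i = psum Vst i ⊓ psum Vs (d - i) := by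
    intro i
    by_cases h : 0 ≤ i ∧ i ≤ d
    · exact hWdef i h.1 h.2
    · rw [hWout i (by omega)]
      rcases lt_or_ge i 0 with hi | hi
      · rw [psum_neg Vst hi, bot_inf_eq]
      · rw [psum_neg Vs (show d - i < 0 by omega), inf_bot_eq]
  have triA : IsTri A (fun i => q ^ (2*i - d)) Vs d :=
    IsTri.of_scalar fun j h0 hj x hx => by
      rw [hVeig j h0 hj] at hx
      exact Module.End.mem_eigenspace_iff.1 hx
  have triAst : IsTri Astar (fun i => q ^ (2*i - d) + c * q ^ (d - 2*i)) Vst d :=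
    IsTri.of_scalar fun j h0 hj x hx => by
      rw [hVsteig j h0 hj] at hx
      exact Module.End.mem_eigenspace_iff.1 hx
  have hraise : ∀ i, 0 ≤ i → i ≤ d → ∀ x ∈ Ws i, A x - q ^ (d - 2*i) • x ∈ Ws (i + 1) := by
    intro i h0 hi x hx
    rw [hW] at hx ⊢
    refine ⟨sub_mem (psum_tridiagonal (fun i hi => hVstout i (Or.inl hi)) htd2 hx.1)
      (Submodule.smul_mem _ _ (psum_mono Vst (by omega) hx.1)), ?_⟩
    have h1 := triA.sub_mem (show d - i ≤ d by omega) hx.2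
    rwa [show 2 * (d - i) - d = d - 2 * i by ring, show d - i - 1 = d - (i + 1) by ring] at h1
  have hlower : ∀ i, 0 ≤ i → i ≤ d → ∀ x ∈ Ws i,
      Astar x - (q ^ (2*i - d) + c * q ^ (d - 2*i)) • x ∈ Ws (i - 1) := by
    intro i h0 hi x hx
    rw [hW] at hx ⊢
    refine ⟨triAst.sub_mem hi hx.1, ?_⟩
    have h1 := psum_tridiagonal (fun i hi => hVout i (Or.inl hi)) htd1 hx.2
    rw [show d - i + 1 = d - (i - 1) by ring] at h1
    exact sub_mem h1 (Submodule.smul_mem _ _ (psum_mono Vs (by omega) hx.2))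
  have hWs_le : ∀ i k, i ≤ k → Ws i ≤ psum Ws k := by
    intro i k hik
    rcases lt_or_ge i 0 with hi | hi
    · simp [hWout i (Or.inl hi)]
    · exact le_psum Ws hi hik
  have triAt : IsTri At (fun i => q ^ (d - 2*i)) Ws d := by
    intro i h0 hi x hx
    have h1 : At x - q ^ (d - 2*i) • x =
        c⁻¹ • (Astar x - (q ^ (2*i - d) + c * q ^ (d - 2*i)) • x) := by
      rw [hAt, LinearMap.smul_apply, LinearMap.sub_apply, hB i h0 hi x hx, add_smul, mul_smul,
        ← sub_sub, smul_sub _ _ (c • _), inv_smul_smul₀ hc]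
    simp only
    rw [h1]
    exact Submodule.smul_mem _ _ (hWs_le _ _ le_rfl (hlower i h0 hi x hx))
  have hinj : ∀ i j : ℤ, q ^ (d - 2*i) = q ^ (d - 2*j) → i = j := fun i j h => by
    have := zpow_injective_of_not_rootOfUnity hq0 hqru h
    omega
  have triB : IsTri B (fun i => q ^ (2*i - d)) Ws d := IsTri.of_scalar hB
  have hdisj : ∀ i, 0 ≤ i → i ≤ d → Disjoint (psum Ws (i - 1)) (Ws i) := fun i h0 hi =>
    (triB.disjoint (fun i j h => by
      have := zpow_injective_of_not_rootOfUnity hq0 hqru h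
      omega) hi).mono_right fun x hx => Module.End.mem_eigenspace_iff.2 (hB i h0 hi x hx)
  have hW0 : Ws 0 ≠ ⊥ := by
    rw [hW, sub_zero, hVtot, inf_top_eq, psum_zero]
    exact hVstne 0 le_rfl hd
  have hWd : Ws d ≠ ⊥ := by
    rw [hW, sub_self, hVsttot, top_inf_eq, psum_zero]
    exact hVne 0 le_rfl hd
  have hWne : ∀ i, 0 ≤ i → i ≤ d → Ws i ≠ ⊥ := by
    intro i h0 hi hbot
    have hpos : 0 < i := lt_of_le_of_ne h0 fun e => hW0 (e ▸ hbot)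
    have hAinv : Submodule.map A (psum Ws (i - 1)) ≤ psum Ws (i - 1) := by
      refine Submodule.map_le_iff_le_comap.2 (psum_le fun j hj0 hj x hx => ?_)
      have h1 : A x - q ^ (d - 2*j) • x ∈ psum Ws (i - 1) := by
        have h2 := hraise j hj0 (by omega) x hx
        rcases hj.lt_or_eq with hlt | heq
        · exact hWs_le _ _ (by omega) h2
        · rw [show j + 1 = i by omega, hbot] at h2
          exact bot_le (a := psum Ws (i - 1)) h2
      have h3 := add_mem h1 (Submodule.smul_mem _ (q ^ (d - 2*j)) (hWs_le j (i - 1) hj hx))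
      rwa [sub_add_cancel] at h3
    have hAstinv : Submodule.map Astar (psum Ws (i - 1)) ≤ psum Ws (i - 1) := by
      refine Submodule.map_le_iff_le_comap.2 (psum_le fun j hj0 hj x hx => ?_)
      have h3 := add_mem (hWs_le _ (i - 1) (by omega) (hlower j hj0 (by omega) x hx))
        (Submodule.smul_mem _ (q ^ (2*j - d) + c * q ^ (d - 2*j)) (hWs_le j (i - 1) hj hx))
      rwa [sub_add_cancel] at h3
    rcases hirr _ hAinv hAstinv with h | h
    · exact hW0 (le_bot_iff.1 (h ▸ hWs_le 0 (i - 1) (by omega)))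
    · have h1 := (hdisj d hd le_rfl).mono_left (psum_mono Ws (show i - 1 ≤ d - 1 by omega))
      rw [h, top_disjoint] at h1
      exact hWd h1
  have hfin : ∀ i : ℤ, 0 ≤ i → i ≤ d →
      Module.finrank 𝕂 (Module.End.eigenspace At (q ^ (d - 2*i))) = Module.finrank 𝕂 (Ws i) :=
    fun i h0 hi => triAt.finrank_eigenspace_eq hinj hWtot h0 hi (hdisj i h0 hi)
  refine ⟨?_, fun i h0 hi hbot => hWne i h0 hi ?_, hfin⟩
  · exact (triAt.psum_eq_psum_eigenspace hinj hWtot le_rfl).symm.trans hWtot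
  · rw [← Submodule.finrank_eq_zero (R := 𝕂), ← hfin i h0 hi, hbot, finrank_bot]
end

section
/- The linear maps A and Ã* satisfy the cubic q-Serre relations: A³Ã* − [3]A²Ã*A + [3]AÃ*A² − Ã*A³ = 0 and (Ã*)³A − [3](Ã*)²AÃ* + [3]Ã*A(Ã*)² − A(Ã*)³ = 0. -/
/-!
Write `K = B⁻¹`. The flag description of the split decomposition shows that `A - K` maps `W_i` into
`W_{i+1}` and that `A* - B - c K` maps `W_i` into `W_{i-1}`. Since `B` acts on `W_i` as `q^{2i-d}`,
this is the same as the two `q`-Weyl relations (`weyl_raise`, `weyl_lower`)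

* `B A = q² A B - (q² - 1)`,
* `B Ã* = q⁻² Ã* B + (1 - q⁻²)`.

Both of the given tridiagonal actions turn into cubic relations (`cubic_of_tridiagonal`): three
consecutive eigenvalues of `A` are `q⁻²θ, θ, q²θ`, the roots of
`x³ - [3] x²θ + [3] xθ² - θ³`, so `A, A*` satisfy a cubic `q`-Serre relation; three consecutive
eigenvalues of `A*` are the roots of `x³ - [3] x²θ + [3] xθ² - θ³ - ρ (x - θ)` with
`ρ = -c (q² - q⁻²)²`, so `A*, A` satisfy the Serre relation up to the correction `ρ (A* A - A A*)`.

By the first Weyl relation `A, B` also satisfy the Serre relation that is cubic in `A`; this relation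
is linear in its second argument, hence holds for `A` and `Ã* = c⁻¹ (A* - B)`.
For the other relation, substitute `A* = B + c Ã*` and use the Weyl relations to move every `B` to
the right: all the terms of degree less than three in `Ã*` cancel against the `ρ` correction, so that
the relation for `A*, A` becomes `c³` times the Serre relation for `Ã*, A`
(`serre_of_askeyWilson`).
-/

/-! ### Noncommutative algebra -/

section Algebra

variable {𝕂 E : Type*} [Field 𝕂] [Ring E] [Algebra 𝕂 E]

/-- The expression `X³ Y - b X² Y X + b X Y X² - Y X³`, which is the cubic `q`-Serre expression when
`b = [3]`. -/
def serreCubic (b : 𝕂) (X Y : E) : E :=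
  X ^ 3 * Y - b • (X ^ 2 * Y * X) + b • (X * Y * X ^ 2) - Y * X ^ 3

/-- The Serre relation of `A` with `B` follows from the `q`-Weyl relation, because the cubic
expression factors through `q A B - q⁻¹ B A`, a scalar, followed by the commutator with `A`. -/
lemma serre_of_weyl {q : 𝕂} (hq : q ≠ 0) (A B : E)
    (h1 : B * A = q ^ 2 • (A * B) - (q ^ 2 - 1) • (1 : E)) :
    serreCubic (q ^ 2 + 1 + (q ^ 2)⁻¹) A B = 0 := by
  have h1' (x : E) : B * (A * x) = q ^ 2 • (A * (B * x)) - (q ^ 2 - 1) • x := by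
    rw [← mul_assoc, h1]
    simp [sub_mul, mul_assoc]
  simp only [serreCubic, pow_succ, pow_zero, one_mul, mul_assoc] at h1 h1' ⊢
  simp only [h1, h1', mul_sub, smul_sub, mul_smul_comm, smul_smul, mul_one]
  match_scalars <;> field_simp <;> ring

/-- In the presence of the `q`-Weyl relations, the Askey–Wilson type cubic relation for `B + c T` and
`A` is `c³` times the Serre relation for `T` and `A`. -/
lemma serre_of_askeyWilson {q c : 𝕂} (hq : q ≠ 0) (hc : c ≠ 0) (A B T : E)
    (h1 : B * A = q ^ 2 • (A * B) - (q ^ 2 - 1) • (1 : E))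
    (h2 : B * T = (q ^ 2)⁻¹ • (T * B) + (1 - (q ^ 2)⁻¹) • (1 : E))
    (h3 : serreCubic (q ^ 2 + 1 + (q ^ 2)⁻¹) (B + c • T) A
      = (-c * (q ^ 2 - (q ^ 2)⁻¹) ^ 2) • ((B + c • T) * A - A * (B + c • T))) :
    serreCubic (q ^ 2 + 1 + (q ^ 2)⁻¹) T A = 0 := by
  have h1' (x : E) : B * (A * x) = q ^ 2 • (A * (B * x)) - (q ^ 2 - 1) • x := by
    rw [← mul_assoc, h1]
    simp [sub_mul, mul_assoc]
  have h2' (x : E) :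
      B * (T * x) = (q ^ 2)⁻¹ • (T * (B * x)) + (1 - (q ^ 2)⁻¹) • x := by
    rw [← mul_assoc, h2]
    simp [add_mul, mul_assoc]
  have key : serreCubic (q ^ 2 + 1 + (q ^ 2)⁻¹) (B + c • T) A
      - (-c * (q ^ 2 - (q ^ 2)⁻¹) ^ 2) • ((B + c • T) * A - A * (B + c • T))
      = c ^ 3 • serreCubic (q ^ 2 + 1 + (q ^ 2)⁻¹) T A := by
    clear h3
    simp only [serreCubic, pow_succ, pow_zero, one_mul, mul_assoc] at h1 h1' h2 h2' ⊢
    simp only [add_mul, mul_add, mul_sub, sub_mul, smul_add, smul_sub, mul_smul_comm,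
      smul_mul_assoc, mul_assoc]
    simp only [h1, h1', h2, h2', mul_add, mul_sub, smul_add, smul_sub, mul_smul_comm, smul_smul,
      mul_one]
    match_scalars <;> field_simp <;> ring
  rw [h3, sub_self] at key
  exact (smul_eq_zero.mp key.symm).resolve_left (pow_ne_zero 3 hc)

end Algebra

/-! ### Tridiagonal actions, flags and the split decomposition -/

section Linear

variable {𝕂 V : Type*} [Field 𝕂] [AddCommGroup V] [Module 𝕂 V]

/-- If `Q` acts tridiagonally on eigenspaces of `P` whose consecutive eigenvalues `μ (i-1)`, `μ i`,
`μ (i+1)` are the roots of `x³ - b x² μ_i + b x μ_i² - μ_i³ - ρ (x - μ_i)`, then `P, Q` satisfy the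
corresponding cubic relation. -/
lemma cubic_of_tridiagonal {d : ℤ} (X : ℤ → Submodule 𝕂 V) (P Q : Module.End 𝕂 V) (μ : ℤ → 𝕂)
    (b ρ : 𝕂) (hP : ∀ i, ∀ v ∈ X i, P v = μ i • v)
    (htd : ∀ i, Submodule.map Q (X i) ≤ X (i - 1) ⊔ X i ⊔ X (i + 1))
    (htot : (⨆ i ∈ Finset.Icc (0 : ℤ) d, X i) = ⊤)
    (hroot : ∀ i j, (j = i - 1 ∨ j = i ∨ j = i + 1) →
      μ j ^ 3 - b * μ j ^ 2 * μ i + b * μ j * μ i ^ 2 - μ i ^ 3 - ρ * (μ j - μ i) = 0) :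
    serreCubic b P Q = ρ • (P * Q - Q * P) := by
  rw [← sub_eq_zero, ← LinearMap.ker_eq_top, ← top_le_iff, ← htot]
  refine iSup₂_le fun i _ v hv => ?_
  have hkill (j : ℤ) (hj : j = i - 1 ∨ j = i ∨ j = i + 1) (w : V) (hw : w ∈ X j) :
      P (P (P w)) - (b * μ i) • P (P w) + (b * μ i ^ 2 - ρ) • P w
        + (ρ * μ i - μ i ^ 3) • w = 0 := by
    have h := hroot i j hj
    simp only [hP j w hw, map_smul, smul_smul, ← add_smul, ← sub_smul]
    rw [← zero_smul 𝕂 w, ← h]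
    congr 1
    ring
  obtain ⟨y, hy, w3, hw3, hsum⟩ := Submodule.mem_sup.mp (htd i (Submodule.mem_map_of_mem hv))
  obtain ⟨w1, hw1, w2, hw2, rfl⟩ := Submodule.mem_sup.mp hy
  have e1 := hkill _ (Or.inl rfl) w1 hw1
  have e2 := hkill _ (Or.inr (Or.inl rfl)) w2 hw2
  have e3 := hkill _ (Or.inr (Or.inr rfl)) w3 hw3
  have e : P (P (P (Q v))) - (b * μ i) • P (P (Q v)) + (b * μ i ^ 2 - ρ) • P (Q v)
        + (ρ * μ i - μ i ^ 3) • Q v = 0 := by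
    rw [← hsum]
    simp only [map_add]
    have e123 := congrArg₂ (· + ·) (congrArg₂ (· + ·) e1 e2) e3
    simp only [add_zero] at e123
    rw [← e123]
    module
  rw [LinearMap.mem_ker, ← e]
  simp only [serreCubic, pow_succ, pow_zero, one_mul, LinearMap.sub_apply, LinearMap.add_apply,
    LinearMap.smul_apply, Module.End.mul_apply, hP i v hv, map_smul]
  module

/-- The partial sum `X_0 + ⋯ + X_i` of a family of subspaces. -/
def flagSum (X : ℤ → Submodule 𝕂 V) (i : ℤ) : Submodule 𝕂 V := ⨆ j ∈ Finset.Icc (0 : ℤ) i, X j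

lemma flagSum_mono {X : ℤ → Submodule 𝕂 V} {i j : ℤ} (h : i ≤ j) : flagSum X i ≤ flagSum X j :=
  biSup_mono fun _ hk => Finset.Icc_subset_Icc_right h hk

lemma le_flagSum {X : ℤ → Submodule 𝕂 V} (hout : ∀ i < 0, X i = ⊥) {j i : ℤ} (h : j ≤ i) :
    X j ≤ flagSum X i := by
  rcases lt_or_ge j 0 with hj | hj
  · simp [hout j hj]
  · exact le_iSup₂_of_le j (Finset.mem_Icc.mpr ⟨hj, h⟩) le_rfl

lemma flagSum_tridiagonal {X : ℤ → Submodule 𝕂 V} (hout : ∀ i < 0, X i = ⊥) {Q : Module.End 𝕂 V}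
    (htd : ∀ i, Submodule.map Q (X i) ≤ X (i - 1) ⊔ X i ⊔ X (i + 1)) {i : ℤ} {v : V}
    (hv : v ∈ flagSum X i) : Q v ∈ flagSum X (i + 1) := by
  suffices h : flagSum X i ≤ (flagSum X (i + 1)).comap Q from h hv
  refine iSup₂_le fun j hj => ?_
  have hj := (Finset.mem_Icc.mp hj).2
  rw [← Submodule.map_le_iff_le_comap]
  refine (htd j).trans (sup_le (sup_le ?_ ?_) ?_) <;> exact le_flagSum hout (by omega)

lemma flagSum_eigen {X : ℤ → Submodule 𝕂 V} (hout : ∀ i < 0, X i = ⊥) {P : Module.End 𝕂 V}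
    {μ : ℤ → 𝕂} (hP : ∀ i, ∀ v ∈ X i, P v = μ i • v) {i : ℤ} {v : V}
    (hv : v ∈ flagSum X i) : P v - μ i • v ∈ flagSum X (i - 1) := by
  suffices h : flagSum X i ≤ (flagSum X (i - 1)).comap (P - μ i • (1 : Module.End 𝕂 V)) from h hv
  refine iSup₂_le fun j hj v hv => ?_
  have hj := (Finset.mem_Icc.mp hj).2
  have e : (P - μ i • (1 : Module.End 𝕂 V)) v = (μ j - μ i) • v := by
    simp [hP j v hv, sub_smul]
  rw [Submodule.mem_comap, e]
  rcases hj.eq_or_lt with rfl | hlt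
  · simp
  · exact Submodule.smul_mem _ _ (le_flagSum hout (by omega) hv)

lemma flagSum_eq_bot {X : ℤ → Submodule 𝕂 V} {i : ℤ} (hi : i < 0) : flagSum X i = ⊥ := by
  simp [flagSum, Finset.Icc_eq_empty_of_lt hi]

/-- A map `A` with `(A - q^{d-2i}) W_i ⊆ W_{i+1}` satisfies a `q`-Weyl relation with `B`. -/
lemma weyl_raise {q : 𝕂} (hq : q ≠ 0) {d : ℤ} {W : ℤ → Submodule 𝕂 V} {A B : Module.End 𝕂 V}
    (htot : (⨆ i ∈ Finset.Icc (0 : ℤ) d, W i) = ⊤)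
    (hB : ∀ i, ∀ v ∈ W i, B v = q ^ (2 * i - d) • v)
    (hA : ∀ i, ∀ v ∈ W i, A v - q ^ (d - 2 * i) • v ∈ W (i + 1)) :
    B * A = q ^ 2 • (A * B) - (q ^ 2 - 1) • (1 : Module.End 𝕂 V) := by
  rw [← sub_eq_zero, ← LinearMap.ker_eq_top, ← top_le_iff, ← htot]
  refine iSup₂_le fun i _ v hv => ?_
  obtain ⟨w, hw, hAv⟩ : ∃ w ∈ W (i + 1), A v = q ^ (d - 2 * i) • v + w :=
    ⟨_, hA i v hv, by abel⟩
  have hx : q ^ (2 * i - d) ≠ 0 := zpow_ne_zero _ hq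
  have e1 : q ^ (d - 2 * i) = (q ^ (2 * i - d))⁻¹ := by rw [← zpow_neg]; congr 1; ring
  have e2 : q ^ (2 * (i + 1) - d) = q ^ (2 * i - d) * q ^ 2 := by
    rw [← zpow_natCast, ← zpow_add₀ hq]; congr 1; push_cast; ring
  simp only [LinearMap.mem_ker, LinearMap.sub_apply, LinearMap.smul_apply, Module.End.mul_apply,
    Module.End.one_apply, hAv, hB i v hv, map_add, map_smul, hB _ w hw, e1, e2]
  generalize q ^ (2 * i - d) = x at *
  match_scalars <;> field_simp <;> ring

/-- A map `T` with `(T - q^{d-2i}) W_i ⊆ W_{i-1}` satisfies a `q`-Weyl relation with `B`. -/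
lemma weyl_lower {q : 𝕂} (hq : q ≠ 0) {d : ℤ} {W : ℤ → Submodule 𝕂 V} {T B : Module.End 𝕂 V}
    (htot : (⨆ i ∈ Finset.Icc (0 : ℤ) d, W i) = ⊤)
    (hB : ∀ i, ∀ v ∈ W i, B v = q ^ (2 * i - d) • v)
    (hT : ∀ i, ∀ v ∈ W i, T v - q ^ (d - 2 * i) • v ∈ W (i - 1)) :
    B * T = (q ^ 2)⁻¹ • (T * B) + (1 - (q ^ 2)⁻¹) • (1 : Module.End 𝕂 V) := by
  rw [← sub_eq_zero, ← LinearMap.ker_eq_top, ← top_le_iff, ← htot]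
  refine iSup₂_le fun i _ v hv => ?_
  obtain ⟨w, hw, hTv⟩ : ∃ w ∈ W (i - 1), T v = q ^ (d - 2 * i) • v + w :=
    ⟨_, hT i v hv, by abel⟩
  have hx : q ^ (2 * i - d) ≠ 0 := zpow_ne_zero _ hq
  have e1 : q ^ (d - 2 * i) = (q ^ (2 * i - d))⁻¹ := by rw [← zpow_neg]; congr 1; ring
  have e2 : q ^ (2 * (i - 1) - d) = q ^ (2 * i - d) * (q ^ 2)⁻¹ := by
    rw [← zpow_natCast, ← zpow_neg, ← zpow_add₀ hq]; congr 1; push_cast; ring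
  simp only [LinearMap.mem_ker, LinearMap.sub_apply, LinearMap.add_apply, LinearMap.smul_apply,
    Module.End.mul_apply, Module.End.one_apply, hTv, hB i v hv, map_add, map_smul, hB _ w hw, e1,
    e2]
  generalize q ^ (2 * i - d) = x at *
  match_scalars <;> field_simp <;> ring

end Linear

/-! ### The cubic relations -/


theorem stmt_5
    {𝕂 : Type*} [Field 𝕂] [IsAlgClosed 𝕂]
    {V : Type*} [AddCommGroup V] [Module 𝕂 V] [FiniteDimensional 𝕂 V]
    (hV : 0 < Module.finrank 𝕂 V)
    {q : 𝕂} (hq0 : q ≠ 0) (hqru : ∀ n : ℕ, 0 < n → q ^ n ≠ 1)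
    {c : 𝕂} (hc : c ≠ 0)
    (A Astar : Module.End 𝕂 V)
    (d : ℤ) (hd : 0 ≤ d)
    (Vs Vst : ℤ → Submodule 𝕂 V)
    (hVout : ∀ i : ℤ, i < 0 ∨ d < i → Vs i = ⊥)
    (hVstout : ∀ i : ℤ, i < 0 ∨ d < i → Vst i = ⊥)
    (hVeig : ∀ i : ℤ, 0 ≤ i → i ≤ d → Vs i = Module.End.eigenspace A (q ^ (2*i - d)))
    (hVne : ∀ i : ℤ, 0 ≤ i → i ≤ d → Vs i ≠ ⊥)
    (hVtot : (⨆ i ∈ Finset.Icc (0:ℤ) d, Vs i) = ⊤)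
    (hVsteig : ∀ i : ℤ, 0 ≤ i → i ≤ d →
      Vst i = Module.End.eigenspace Astar (q ^ (2*i - d) + c * q ^ (d - 2*i)))
    (hVstne : ∀ i : ℤ, 0 ≤ i → i ≤ d → Vst i ≠ ⊥)
    (hVsttot : (⨆ i ∈ Finset.Icc (0:ℤ) d, Vst i) = ⊤)
    (htd1 : ∀ i : ℤ, Submodule.map Astar (Vs i) ≤ Vs (i-1) ⊔ Vs i ⊔ Vs (i+1))
    (htd2 : ∀ i : ℤ, Submodule.map A (Vst i) ≤ Vst (i-1) ⊔ Vst i ⊔ Vst (i+1))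
    (hirr : ∀ W : Submodule 𝕂 V, Submodule.map A W ≤ W → Submodule.map Astar W ≤ W →
      W = ⊥ ∨ W = ⊤)
    (Ws : ℤ → Submodule 𝕂 V)
    (hWout : ∀ i : ℤ, i < 0 ∨ d < i → Ws i = ⊥)
    (hWdef : ∀ i : ℤ, 0 ≤ i → i ≤ d →
      Ws i = (⨆ j ∈ Finset.Icc (0:ℤ) i, Vst j) ⊓ (⨆ j ∈ Finset.Icc (0:ℤ) (d - i), Vs j))
    (hWtot : (⨆ i ∈ Finset.Icc (0:ℤ) d, Ws i) = ⊤)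
    (B : Module.End 𝕂 V)
    (hB : ∀ i : ℤ, 0 ≤ i → i ≤ d → ∀ v ∈ Ws i, B v = q ^ (2*i - d) • v)
    (At : Module.End 𝕂 V)
    (hAt : At = c⁻¹ • (Astar - B))
    :
    A ^ 3 * At - ((q ^ 3 - q⁻¹ ^ 3) / (q - q⁻¹)) • (A ^ 2 * At * A)
      + ((q ^ 3 - q⁻¹ ^ 3) / (q - q⁻¹)) • (A * At * A ^ 2) - At * A ^ 3 = 0 ∧
    At ^ 3 * A - ((q ^ 3 - q⁻¹ ^ 3) / (q - q⁻¹)) • (At ^ 2 * A * At)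
      + ((q ^ 3 - q⁻¹ ^ 3) / (q - q⁻¹)) • (At * A * At ^ 2) - A * At ^ 3 = 0 := by
  have hq2 : q ^ 2 - 1 ≠ 0 := sub_ne_zero.mpr (hqru 2 two_pos)
  have hb : (q ^ 3 - q⁻¹ ^ 3) / (q - q⁻¹) = q ^ 2 + 1 + (q ^ 2)⁻¹ := by
    have h : q - q⁻¹ ≠ 0 := by
      intro h
      apply hq2
      field_simp at h
      simpa using h
    rw [div_eq_iff h]
    field_simp
    ring
  -- The eigenvalue equations and the formula for `Ws` hold at all integers, since everything is
  -- zero outside `[0, d]`.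
  have hVeig' : ∀ i, ∀ v ∈ Vs i, A v = q ^ (2 * i - d) • v := by
    intro i v hv
    by_cases h : 0 ≤ i ∧ i ≤ d
    · rw [hVeig i h.1 h.2] at hv
      exact Module.End.mem_eigenspace_iff.mp hv
    · rw [hVout i (by omega), Submodule.mem_bot] at hv
      simp [hv]
  have hVsteig' : ∀ i, ∀ v ∈ Vst i, Astar v = (q ^ (2 * i - d) + c * q ^ (d - 2 * i)) • v := by
    intro i v hv
    by_cases h : 0 ≤ i ∧ i ≤ d
    · rw [hVsteig i h.1 h.2] at hv
      exact Module.End.mem_eigenspace_iff.mp hv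
    · rw [hVstout i (by omega), Submodule.mem_bot] at hv
      simp [hv]
  have hB' : ∀ i, ∀ v ∈ Ws i, B v = q ^ (2 * i - d) • v := by
    intro i v hv
    by_cases h : 0 ≤ i ∧ i ≤ d
    · exact hB i h.1 h.2 v hv
    · rw [hWout i (by omega), Submodule.mem_bot] at hv
      simp [hv]
  have hW : ∀ i, Ws i = flagSum Vst i ⊓ flagSum Vs (d - i) := by
    intro i
    by_cases h : 0 ≤ i ∧ i ≤ d
    · exact hWdef i h.1 h.2
    · rw [hWout i (by omega)]
      rcases lt_or_ge i 0 with hi | hi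
      · rw [flagSum_eq_bot hi, bot_inf_eq]
      · rw [flagSum_eq_bot (X := Vs) (show d - i < 0 by omega), inf_bot_eq]
  have hV0 : ∀ i < 0, Vs i = ⊥ := fun i hi => hVout i (Or.inl hi)
  have hVst0 : ∀ i < 0, Vst i = ⊥ := fun i hi => hVstout i (Or.inl hi)
  have hraise : ∀ i, ∀ v ∈ Ws i, A v - q ^ (d - 2 * i) • v ∈ Ws (i + 1) := by
    intro i v hv
    rw [hW, Submodule.mem_inf] at hv ⊢
    constructor
    · exact sub_mem (flagSum_tridiagonal hVst0 htd2 hv.1) (Submodule.smul_mem _ _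
        (flagSum_mono (by omega) hv.1))
    · have h := flagSum_eigen hV0 hVeig' hv.2
      rwa [show 2 * (d - i) - d = d - 2 * i by ring, show d - i - 1 = d - (i + 1) by ring] at h
  have hlower : ∀ i, ∀ v ∈ Ws i,
      Astar v - (q ^ (2 * i - d) + c * q ^ (d - 2 * i)) • v ∈ Ws (i - 1) := by
    intro i v hv
    rw [hW, Submodule.mem_inf] at hv ⊢
    constructor
    · exact flagSum_eigen (μ := fun i => q ^ (2 * i - d) + c * q ^ (d - 2 * i)) hVst0 hVsteig' hv.1
    · rw [show d - (i - 1) = d - i + 1 by ring]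
      exact sub_mem (flagSum_tridiagonal hV0 htd1 hv.2) (Submodule.smul_mem _ _
        (flagSum_mono (by omega) hv.2))
  have hw1 := weyl_raise hq0 hWtot hB' hraise
  have hw2 : B * At = (q ^ 2)⁻¹ • (At * B) + (1 - (q ^ 2)⁻¹) • (1 : Module.End 𝕂 V) := by
    refine weyl_lower hq0 hWtot hB' fun i v hv => ?_
    have e : At v - q ^ (d - 2 * i) • v
        = c⁻¹ • (Astar v - (q ^ (2 * i - d) + c * q ^ (d - 2 * i)) • v) := by
      rw [hAt]
      simp only [LinearMap.smul_apply, LinearMap.sub_apply, hB' i v hv]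
      match_scalars <;> field_simp <;> ring
    rw [e]
    exact Submodule.smul_mem _ _ (hlower i v hv)
  have hAst : Astar = B + c • At := by
    rw [hAt, smul_smul, mul_inv_cancel₀ hc, one_smul]
    abel
  have hup (i : ℤ) : q ^ (2 * (i + 1) - d) = q ^ (2 * i - d) * q ^ 2 := by
    rw [← zpow_natCast, ← zpow_add₀ hq0]; congr 1; push_cast; ring
  have hdn (i : ℤ) : q ^ (2 * (i - 1) - d) = q ^ (2 * i - d) * (q ^ 2)⁻¹ := by
    rw [← zpow_natCast, ← zpow_neg, ← zpow_add₀ hq0]; congr 1; push_cast; ring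
  have hinv (i : ℤ) : q ^ (d - 2 * i) = (q ^ (2 * i - d))⁻¹ := by
    rw [← zpow_neg]; congr 1; ring
  have hx (i : ℤ) : q ^ (2 * i - d) ≠ 0 := zpow_ne_zero _ hq0
  have hc1 : serreCubic (q ^ 2 + 1 + (q ^ 2)⁻¹) A Astar = (0 : 𝕂) • (A * Astar - Astar * A) := by
    refine cubic_of_tridiagonal Vs A Astar (fun i => q ^ (2 * i - d)) _ _ hVeig' htd1 hVtot ?_
    rintro i j (rfl | rfl | rfl)
    · have := hx i
      simp only [hdn]
      field_simp
      ring
    · ring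
    · have := hx i
      simp only [hup]
      field_simp
      ring
  have hc2 : serreCubic (q ^ 2 + 1 + (q ^ 2)⁻¹) Astar A
      = (-c * (q ^ 2 - (q ^ 2)⁻¹) ^ 2) • (Astar * A - A * Astar) := by
    refine cubic_of_tridiagonal Vst Astar A (fun i => q ^ (2 * i - d) + c * q ^ (d - 2 * i)) _ _
      hVsteig' htd2 hVsttot ?_
    rintro i j (rfl | rfl | rfl)
    · have := hx i
      simp only [hinv, hdn]
      field_simp
      ring
    · ring
    · have := hx i
      simp only [hinv, hup]
      field_simp
      ring
  rw [hb]
  constructor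
  · have hs := serre_of_weyl hq0 A B hw1
    rw [zero_smul] at hc1
    have hlin : serreCubic (q ^ 2 + 1 + (q ^ 2)⁻¹) A At
        = c⁻¹ • (serreCubic (q ^ 2 + 1 + (q ^ 2)⁻¹) A Astar
          - serreCubic (q ^ 2 + 1 + (q ^ 2)⁻¹) A B) := by
      rw [hAt]
      simp only [serreCubic, mul_sub, sub_mul, mul_smul_comm, smul_mul_assoc]
      module
    rw [hc1, hs, sub_zero, smul_zero] at hlin
    exact hlin
  · rw [hAst] at hc2
    exact serre_of_askeyWilson hq0 hc A B At hw1 hw2 hc2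
end

section
/- The linear maps A, A*, K satisfy (qK⁻¹A − q⁻¹AK⁻¹)/(q − q⁻¹) = I and (qKA* − q⁻¹A*K)/(q − q⁻¹) = K² + c·I. -/
/-!
The split decomposition is raised by `A` and lowered by `Astar`: on `Us i` one has
`A v = q ^ (2 * i - d) • v + w` with `w ∈ Us (i + 1)`, because `A` moves `Vst 0 + ⋯ + Vst i` up by
at most one index (`map_mem_of_tridiagonal`), while `A - q ^ (2 * i - d)` kills `Vs i` and
preserves the other eigenspaces (`sub_smul_mem_of_eigen`). The argument for `Astar` exchanges the
two roles and gives `w ∈ Us (i - 1)`. Since `K` and `Kinv` are scalar on each `Us i`, the two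
relations then become scalar identities on each `Us i`: the coefficient of `w` cancels and that
of `v` is as required. As the `Us i` span the space, the relations hold everywhere.
-/

/-- A map sending each `W j` into `W (j - 1) + W j + W (j + 1)` sends the sum of the `W j` over `S`
into the sum over any `S'` that contains all neighbours of `S` with `W k ≠ ⊥`. -/
lemma map_mem_of_tridiagonal {𝕂 V : Type*} [Field 𝕂] [AddCommGroup V] [Module 𝕂 V]
    (B : Module.End 𝕂 V) (W : ℤ → Submodule 𝕂 V)
    (htd : ∀ i : ℤ, Submodule.map B (W i) ≤ W (i-1) ⊔ W i ⊔ W (i+1))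
    (S S' : Finset ℤ)
    (h : ∀ j ∈ S, ∀ k, j - 1 ≤ k → k ≤ j + 1 → W k = ⊥ ∨ k ∈ S')
    {x : V} (hx : x ∈ ⨆ j ∈ S, W j) : B x ∈ ⨆ j ∈ S', W j := by
  have key : (⨆ j ∈ S, W j) ≤ (⨆ j ∈ S', W j).comap B := by
    refine iSup₂_le fun j hj => ?_
    rw [← Submodule.map_le_iff_le_comap]
    have hk : ∀ k, j - 1 ≤ k → k ≤ j + 1 → W k ≤ ⨆ j ∈ S', W j := by
      intro k h1 h2
      rcases h j hj k h1 h2 with h0 | h0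
      · rw [h0]; exact bot_le
      · exact le_iSup₂_of_le k h0 le_rfl
    exact (htd j).trans (sup_le (sup_le (hk _ (by lia) (by lia)) (hk _ (by lia) (by lia)))
      (hk _ (by lia) (by lia)))
  exact key hx

/-- If `B` acts on each `W j` as the scalar `θ j`, then `B - t` maps the sum of the `W j` over `S`
into the sum over any `S'` containing all indices of `S` with `θ j ≠ t`. -/
lemma sub_smul_mem_of_eigen {𝕂 V : Type*} [Field 𝕂] [AddCommGroup V] [Module 𝕂 V]
    (B : Module.End 𝕂 V) (W : ℤ → Submodule 𝕂 V) (θ : ℤ → 𝕂) (t : 𝕂)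
    (S S' : Finset ℤ) (hB : ∀ j ∈ S, ∀ v ∈ W j, B v = θ j • v)
    (h : ∀ j ∈ S, θ j = t ∨ j ∈ S')
    {x : V} (hx : x ∈ ⨆ j ∈ S, W j) : B x - t • x ∈ ⨆ j ∈ S', W j := by
  have key : (⨆ j ∈ S, W j) ≤ (⨆ j ∈ S', W j).comap (B - t • (1 : Module.End 𝕂 V)) := by
    refine iSup₂_le fun j hj v hv => ?_
    have e : (B - t • (1 : Module.End 𝕂 V)) v = (θ j - t) • v := by
      simp [hB j hj v hv, sub_smul]
    rw [Submodule.mem_comap, e]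
    rcases h j hj with h0 | h0
    · simp [h0]
    · exact Submodule.smul_mem _ _ ((le_iSup₂_of_le j h0 le_rfl : W j ≤ _) hv)
  simpa using key hx


theorem stmt_7
    {𝕂 : Type*} [Field 𝕂] [IsAlgClosed 𝕂]
    {V : Type*} [AddCommGroup V] [Module 𝕂 V] [FiniteDimensional 𝕂 V]
    (hV : 0 < Module.finrank 𝕂 V)
    {q : 𝕂} (hq0 : q ≠ 0) (hqru : ∀ n : ℕ, 0 < n → q ^ n ≠ 1)
    {c : 𝕂} (hc : c ≠ 0)
    (A Astar : Module.End 𝕂 V)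
    (d : ℤ) (hd : 0 ≤ d)
    (Vs Vst : ℤ → Submodule 𝕂 V)
    (hVout : ∀ i : ℤ, i < 0 ∨ d < i → Vs i = ⊥)
    (hVstout : ∀ i : ℤ, i < 0 ∨ d < i → Vst i = ⊥)
    (hVeig : ∀ i : ℤ, 0 ≤ i → i ≤ d → Vs i = Module.End.eigenspace A (q ^ (2*i - d)))
    (hVne : ∀ i : ℤ, 0 ≤ i → i ≤ d → Vs i ≠ ⊥)
    (hVtot : (⨆ i ∈ Finset.Icc (0:ℤ) d, Vs i) = ⊤)
    (hVsteig : ∀ i : ℤ, 0 ≤ i → i ≤ d →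
      Vst i = Module.End.eigenspace Astar (q ^ (2*i - d) + c * q ^ (d - 2*i)))
    (hVstne : ∀ i : ℤ, 0 ≤ i → i ≤ d → Vst i ≠ ⊥)
    (hVsttot : (⨆ i ∈ Finset.Icc (0:ℤ) d, Vst i) = ⊤)
    (htd1 : ∀ i : ℤ, Submodule.map Astar (Vs i) ≤ Vs (i-1) ⊔ Vs i ⊔ Vs (i+1))
    (htd2 : ∀ i : ℤ, Submodule.map A (Vst i) ≤ Vst (i-1) ⊔ Vst i ⊔ Vst (i+1))
    (hirr : ∀ W : Submodule 𝕂 V, Submodule.map A W ≤ W → Submodule.map Astar W ≤ W →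
      W = ⊥ ∨ W = ⊤)
    (Us : ℤ → Submodule 𝕂 V)
    (hUout : ∀ i : ℤ, i < 0 ∨ d < i → Us i = ⊥)
    (hUdef : ∀ i : ℤ, 0 ≤ i → i ≤ d →
      Us i = (⨆ j ∈ Finset.Icc (0:ℤ) i, Vst j) ⊓ (⨆ j ∈ Finset.Icc i d, Vs j))
    (hUtot : (⨆ i ∈ Finset.Icc (0:ℤ) d, Us i) = ⊤)
    (K Kinv : Module.End 𝕂 V)
    (hK : ∀ i : ℤ, 0 ≤ i → i ≤ d → ∀ v ∈ Us i, K v = q ^ (2*i - d) • v)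
    (hKinv : ∀ i : ℤ, 0 ≤ i → i ≤ d → ∀ v ∈ Us i, Kinv v = q ^ (d - 2*i) • v)
    (hKKinv : K * Kinv = 1) (hKinvK : Kinv * K = 1)
    :
    (q - q⁻¹)⁻¹ • (q • (Kinv * A) - q⁻¹ • (A * Kinv)) = (1 : Module.End 𝕂 V) ∧
    (q - q⁻¹)⁻¹ • (q • (K * Astar) - q⁻¹ • (Astar * K)) = K ^ 2 + c • (1 : Module.End 𝕂 V) := by
  have hs : q - q⁻¹ ≠ 0 := by
    intro h
    apply hqru 2 (by norm_num)
    have h1 : q = q⁻¹ := sub_eq_zero.mp h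
    calc q ^ 2 = q * q := sq q
      _ = q * q⁻¹ := by rw [← h1]
      _ = 1 := mul_inv_cancel₀ hq0
  -- Two endomorphisms agree as soon as they agree on every `Us i`.
  have hext : ∀ F G : Module.End 𝕂 V,
      (∀ i : ℤ, 0 ≤ i → i ≤ d → ∀ v ∈ Us i, F v = G v) → F = G := by
    intro F G h
    have hle : (⨆ i ∈ Finset.Icc (0:ℤ) d, Us i) ≤ LinearMap.eqLocus F G := by
      refine iSup₂_le fun i hi v hv => ?_
      rw [Finset.mem_Icc] at hi
      exact h i hi.1 hi.2 v hv
    rw [hUtot] at hle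
    exact LinearMap.ext fun v => hle (Submodule.mem_top (x := v))
  have hraise : ∀ i : ℤ, 0 ≤ i → i ≤ d → ∀ v ∈ Us i,
      A v - q ^ (2*i - d) • v ∈ Us (i+1) := by
    intro i h0 h1 v hv
    rw [hUdef i h0 h1] at hv
    have hT : A v - q ^ (2*i - d) • v ∈ ⨆ j ∈ Finset.Icc (i+1) d, Vs j := by
      refine sub_smul_mem_of_eigen A Vs (fun j => q ^ (2*j - d)) _ (Finset.Icc i d) _ ?_ ?_ hv.2
      · intro j hj w hw
        rw [Finset.mem_Icc] at hj
        rw [hVeig j (by lia) hj.2] at hw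
        exact Module.End.mem_eigenspace_iff.mp hw
      · intro j hj
        rw [Finset.mem_Icc] at hj
        rcases eq_or_ne j i with h | h
        · left; rw [h]
        · right; rw [Finset.mem_Icc]; lia
    rcases h1.lt_or_eq with h2 | h2
    · rw [hUdef (i+1) (by lia) (by lia)]
      refine ⟨Submodule.sub_mem _ ?_ (Submodule.smul_mem _ _ ?_), hT⟩
      · refine map_mem_of_tridiagonal A Vst htd2 (Finset.Icc 0 i) _ ?_ hv.1
        intro j hj k hk1 hk2
        rw [Finset.mem_Icc] at hj
        rcases lt_or_ge k 0 with h | h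
        · exact Or.inl (hVstout k (Or.inl h))
        · right; rw [Finset.mem_Icc]; lia
      · refine SetLike.le_def.mp (biSup_mono fun j hj => ?_) hv.1
        rw [Finset.mem_Icc] at hj ⊢; lia
    · rw [hUout (i+1) (by lia)]
      simpa [Finset.Icc_eq_empty (show ¬ i + 1 ≤ d by lia)] using hT
  have hlower : ∀ i : ℤ, 0 ≤ i → i ≤ d → ∀ v ∈ Us i,
      Astar v - (q ^ (2*i - d) + c * q ^ (d - 2*i)) • v ∈ Us (i-1) := by
    intro i h0 h1 v hv
    rw [hUdef i h0 h1] at hv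
    have hT : Astar v - (q ^ (2*i - d) + c * q ^ (d - 2*i)) • v
        ∈ ⨆ j ∈ Finset.Icc 0 (i-1), Vst j := by
      refine sub_smul_mem_of_eigen Astar Vst (fun j => q ^ (2*j - d) + c * q ^ (d - 2*j)) _
        (Finset.Icc 0 i) _ ?_ ?_ hv.1
      · intro j hj w hw
        rw [Finset.mem_Icc] at hj
        rw [hVsteig j hj.1 (by lia)] at hw
        exact Module.End.mem_eigenspace_iff.mp hw
      · intro j hj
        rw [Finset.mem_Icc] at hj
        rcases eq_or_ne j i with h | h
        · left; rw [h]
        · right; rw [Finset.mem_Icc]; lia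
    rcases h0.lt_or_eq with h2 | h2
    · rw [hUdef (i-1) (by lia) (by lia)]
      refine ⟨hT, Submodule.sub_mem _ ?_ (Submodule.smul_mem _ _ ?_)⟩
      · refine map_mem_of_tridiagonal Astar Vs htd1 (Finset.Icc i d) _ ?_ hv.2
        intro j hj k hk1 hk2
        rw [Finset.mem_Icc] at hj
        rcases lt_or_ge d k with h | h
        · exact Or.inl (hVout k (Or.inr h))
        · right; rw [Finset.mem_Icc]; lia
      · refine SetLike.le_def.mp (biSup_mono fun j hj => ?_) hv.2
        rw [Finset.mem_Icc] at hj ⊢; lia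
    · rw [hUout (i-1) (by lia)]
      simpa [Finset.Icc_eq_empty (show ¬ 0 ≤ i - 1 by lia)] using hT
  -- The scalar actions extend to all indices, since `Us i = ⊥` out of range.
  have hK' : ∀ i : ℤ, ∀ v ∈ Us i, K v = q ^ (2*i - d) • v := by
    intro i v hv
    by_cases h : 0 ≤ i ∧ i ≤ d
    · exact hK i h.1 h.2 v hv
    · rw [hUout i (by lia), Submodule.mem_bot] at hv
      simp [hv]
  have hKinv' : ∀ i : ℤ, ∀ v ∈ Us i, Kinv v = q ^ (d - 2*i) • v := by
    intro i v hv
    by_cases h : 0 ≤ i ∧ i ≤ d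
    · exact hKinv i h.1 h.2 v hv
    · rw [hUout i (by lia), Submodule.mem_bot] at hv
      simp [hv]
  constructor
  · rw [inv_smul_eq_iff₀ hs]
    refine hext _ _ fun i h0 h1 v hv => ?_
    have hw := hKinv' _ _ (hraise i h0 h1 v hv)
    obtain ⟨w, hwdef⟩ : ∃ w, w = A v - q ^ (2*i - d) • v := ⟨_, rfl⟩
    have hA : A v = q ^ (2*i - d) • v + w := by rw [hwdef]; abel
    rw [← hwdef] at hw
    have e1 : q ^ (d - 2*(i+1)) = q ^ (d - 2*i) * (q⁻¹ * q⁻¹) := by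
      rw [show d - 2*(i+1) = (d - 2*i) + (-1) + (-1) by ring, zpow_add₀ hq0, zpow_add₀ hq0,
        zpow_neg_one, mul_assoc]
    have e2 : q ^ (2*i - d) = (q ^ (d - 2*i))⁻¹ := by rw [← zpow_neg]; congr 1; ring
    have hp : q ^ (d - 2*i) ≠ 0 := zpow_ne_zero _ hq0
    simp only [LinearMap.sub_apply, LinearMap.smul_apply, Module.End.mul_apply, Module.End.one_apply,
      hKinv' i v hv, map_add, map_smul, hA, hw, e1, e2]
    match_scalars <;> field_simp <;> ring
  · rw [inv_smul_eq_iff₀ hs]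
    refine hext _ _ fun i h0 h1 v hv => ?_
    have hw := hK' _ _ (hlower i h0 h1 v hv)
    obtain ⟨w, hwdef⟩ : ∃ w, w = Astar v - (q ^ (2*i - d) + c * q ^ (d - 2*i)) • v := ⟨_, rfl⟩
    have hA : Astar v = (q ^ (2*i - d) + c * q ^ (d - 2*i)) • v + w := by rw [hwdef]; abel
    rw [← hwdef] at hw
    have e1 : q ^ (2*(i-1) - d) = q ^ (2*i - d) * (q⁻¹ * q⁻¹) := by
      rw [show 2*(i-1) - d = (2*i - d) + (-1) + (-1) by ring, zpow_add₀ hq0, zpow_add₀ hq0,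
        zpow_neg_one, mul_assoc]
    have e2 : q ^ (d - 2*i) = (q ^ (2*i - d))⁻¹ := by rw [← zpow_neg]; congr 1; ring
    have hp : q ^ (2*i - d) ≠ 0 := zpow_ne_zero _ hq0
    simp only [LinearMap.sub_apply, LinearMap.add_apply, LinearMap.smul_apply, Module.End.mul_apply,
      Module.End.one_apply, pow_two K, hK' i v hv, map_add, map_smul, hA, hw, e1, e2]
    generalize q ^ (2*i - d) = p at hp
    match_scalars <;> field_simp <;> ring
end

section
/- For 0 ≤ i ≤ d: (B − K)U_i ⊆ U_{i−1} and (A* − B − cK⁻¹)U_i ⊆ U_{i−1}. -/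
/-!
Write `F i = V*_0 + ⋯ + V*_i` and `G i = V_i + ⋯ + V_d`, so that `U_i = F i ∩ G i`; the conclusion
`(B - K) U_i ⊆ U_{i-1}` splits into a statement about `G` and one about `F`.

* `A - q^{d-2i}` sends `W_i` into `W_{i+1}`, which gives the `q`-Weyl relation
  `q A B - q⁻¹ B A = (q - q⁻¹) I`. Applied to `v ∈ V_k` it says that `B v - q^{d-2k} v` is an
  eigenvector of `A` for `q^{2(k-1)-d}`, so `B V_k ⊆ V_{k-1} + V_k` and `B` sends `G i` into
  `G (i-1)`.
* `A* - θ*_i` sends `W_i` into `W_{i-1}`. Since the `θ*_i` are distinct, this forces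
  `F i = W_0 + ⋯ + W_i`, and so `B - q^{2i-d}` sends `F i` into `F (i-1)`.

On `U_i`, where `K` is the scalar `q^{2i-d}`, the two combine to the first inclusion. The second
one follows, because `A* - K - c K⁻¹` also lowers the `U_i`.

The hypotheses do not say outright that the `θ*_i` are distinct. If `θ*_i = θ*_j` with `i < j`,
then `F j = F (j-1)`, so `U_j ⊆ U_{j-1}` and hence `U_j = 0`, as `K` has different eigenvalues
on these two spaces. But then `U_0 + ⋯ + U_{j-1}` is invariant under `A` and `A*`; it is nonzero
since it contains `U_0 = V*_0`, and it is not `V`, since otherwise `F (j-1) = V` and `U_j` would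
contain `V_d`. This contradicts irreducibility.
-/

/-! ### Partial sums of a family of subspaces indexed by `ℤ` -/

section PartialSums

variable {𝕂 : Type*} [Field 𝕂] {V : Type*} [AddCommGroup V] [Module 𝕂 V]

theorem le_lowSum {X : ℤ → Submodule 𝕂 V} (hX : ∀ i : ℤ, i < 0 → X i = ⊥) {k i : ℤ}
    (h : k ≤ i) : X k ≤ ⨆ j ∈ Finset.Icc (0 : ℤ) i, X j := by
  rcases lt_or_ge k 0 with hk | hk
  · simp [hX k hk]
  · exact le_iSup₂_of_le k (Finset.mem_Icc.2 ⟨hk, h⟩) le_rfl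

theorem le_highSum {X : ℤ → Submodule 𝕂 V} {d : ℤ} (hX : ∀ i : ℤ, d < i → X i = ⊥) {k i : ℤ}
    (h : i ≤ k) : X k ≤ ⨆ j ∈ Finset.Icc i d, X j := by
  rcases lt_or_ge d k with hk | hk
  · simp [hX k hk]
  · exact le_iSup₂_of_le k (Finset.mem_Icc.2 ⟨h, hk⟩) le_rfl

theorem lowSum_mono {X : ℤ → Submodule 𝕂 V} (hX : ∀ i : ℤ, i < 0 → X i = ⊥) {i i' : ℤ}
    (h : i ≤ i') : (⨆ j ∈ Finset.Icc (0 : ℤ) i, X j) ≤ ⨆ j ∈ Finset.Icc (0 : ℤ) i', X j :=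
  iSup₂_le fun _ hk => le_lowSum hX ((Finset.mem_Icc.1 hk).2.trans h)

theorem highSum_mono {X : ℤ → Submodule 𝕂 V} {d : ℤ} (hX : ∀ i : ℤ, d < i → X i = ⊥) {i i' : ℤ}
    (h : i' ≤ i) : (⨆ j ∈ Finset.Icc i d, X j) ≤ ⨆ j ∈ Finset.Icc i' d, X j :=
  iSup₂_le fun _ hk => le_highSum hX (h.trans (Finset.mem_Icc.1 hk).1)

theorem lowSum_tridiag {X : ℤ → Submodule 𝕂 V} (hX : ∀ i : ℤ, i < 0 → X i = ⊥)
    {T : Module.End 𝕂 V} (hT : ∀ i : ℤ, Submodule.map T (X i) ≤ X (i - 1) ⊔ X i ⊔ X (i + 1))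
    (i : ℤ) {x : V} (hx : x ∈ ⨆ j ∈ Finset.Icc (0 : ℤ) i, X j) :
    T x ∈ ⨆ j ∈ Finset.Icc (0 : ℤ) (i + 1), X j := by
  suffices h : (⨆ j ∈ Finset.Icc (0 : ℤ) i, X j) ≤
      (⨆ j ∈ Finset.Icc (0 : ℤ) (i + 1), X j).comap T from h hx
  refine iSup₂_le fun k hk => Submodule.map_le_iff_le_comap.1 ((hT k).trans ?_)
  have := (Finset.mem_Icc.1 hk).2
  exact sup_le (sup_le (le_lowSum hX (by omega)) (le_lowSum hX (by omega)))
    (le_lowSum hX (by omega))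

theorem highSum_tridiag {X : ℤ → Submodule 𝕂 V} {d : ℤ} (hX : ∀ i : ℤ, d < i → X i = ⊥)
    {T : Module.End 𝕂 V} (hT : ∀ i : ℤ, Submodule.map T (X i) ≤ X (i - 1) ⊔ X i ⊔ X (i + 1))
    (i : ℤ) {x : V} (hx : x ∈ ⨆ j ∈ Finset.Icc i d, X j) :
    T x ∈ ⨆ j ∈ Finset.Icc (i - 1) d, X j := by
  suffices h : (⨆ j ∈ Finset.Icc i d, X j) ≤
      (⨆ j ∈ Finset.Icc (i - 1) d, X j).comap T from h hx
  refine iSup₂_le fun k hk => Submodule.map_le_iff_le_comap.1 ((hT k).trans ?_)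
  have := (Finset.mem_Icc.1 hk).1
  exact sup_le (sup_le (le_highSum hX (by omega)) (le_highSum hX (by omega)))
    (le_highSum hX (by omega))

/-- Subtracting the top eigenvalue of a partial sum of eigenspaces removes its top summand; more
generally `T` may act on each `X k` as a scalar up to an error in `X (k - 1)`. -/
theorem lowSum_sub_smul {X : ℤ → Submodule 𝕂 V} (hX : ∀ i : ℤ, i < 0 → X i = ⊥)
    {T : Module.End 𝕂 V} {θ : ℤ → 𝕂} (hT : ∀ i : ℤ, ∀ x ∈ X i, T x - θ i • x ∈ X (i - 1))
    (i : ℤ) {x : V} (hx : x ∈ ⨆ j ∈ Finset.Icc (0 : ℤ) i, X j) :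
    T x - θ i • x ∈ ⨆ j ∈ Finset.Icc (0 : ℤ) (i - 1), X j := by
  suffices h : (⨆ j ∈ Finset.Icc (0 : ℤ) i, X j) ≤
      (⨆ j ∈ Finset.Icc (0 : ℤ) (i - 1), X j).comap (T - θ i • (1 : Module.End 𝕂 V)) by exact h hx
  refine iSup₂_le fun k hk y hy => ?_
  have hki := (Finset.mem_Icc.1 hk).2
  change T y - θ i • y ∈ ⨆ j ∈ Finset.Icc (0 : ℤ) (i - 1), X j
  rcases hki.eq_or_lt with rfl | hlt
  · exact le_lowSum hX le_rfl (hT k y hy)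
  · have e : T y - θ i • y = (T y - θ k • y) + (θ k - θ i) • y := by module
    rw [e]
    exact add_mem (le_lowSum hX (by omega) (hT k y hy))
      (Submodule.smul_mem _ _ (le_lowSum hX (by omega) hy))

theorem highSum_sub_smul {X : ℤ → Submodule 𝕂 V} {d : ℤ} (hX : ∀ i : ℤ, d < i → X i = ⊥)
    {T : Module.End 𝕂 V} {θ : ℤ → 𝕂} (hT : ∀ i : ℤ, ∀ x ∈ X i, T x = θ i • x)
    (i : ℤ) {x : V} (hx : x ∈ ⨆ j ∈ Finset.Icc i d, X j) :
    T x - θ i • x ∈ ⨆ j ∈ Finset.Icc (i + 1) d, X j := by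
  suffices h : (⨆ j ∈ Finset.Icc i d, X j) ≤
      (⨆ j ∈ Finset.Icc (i + 1) d, X j).comap (T - θ i • (1 : Module.End 𝕂 V)) by exact h hx
  refine iSup₂_le fun k hk y hy => ?_
  have hki := (Finset.mem_Icc.1 hk).1
  change T y - θ i • y ∈ ⨆ j ∈ Finset.Icc (i + 1) d, X j
  rw [hT k y hy]
  rcases hki.eq_or_lt with rfl | hlt
  · simp
  · rw [← sub_smul]
    exact Submodule.smul_mem _ _ (le_highSum hX (by omega) hy)

/-- If `T - θ i` lowers the `S i`, whose total sum is everything, then each eigenvector of `T` for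
`θ j` lies in `S 0 + ⋯ + S j`, as long as `θ j ≠ θ k` for `j < k ≤ d`: the factors `T - θ k`
with `k = d, …, j + 1` act on it as nonzero scalars and push it down the flag. -/
theorem mem_lowSum_of_eigen {S : ℤ → Submodule 𝕂 V} (hS : ∀ i : ℤ, i < 0 → S i = ⊥) {d : ℤ}
    (htot : (⨆ j ∈ Finset.Icc (0 : ℤ) d, S j) = ⊤) {T : Module.End 𝕂 V} {θ : ℤ → 𝕂}
    (hT : ∀ i : ℤ, ∀ x ∈ S i, T x - θ i • x ∈ S (i - 1)) {j : ℤ} (hjd : j ≤ d)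
    (hθ : ∀ k : ℤ, j < k → k ≤ d → θ j ≠ θ k) {x : V} (hx : T x = θ j • x) :
    x ∈ ⨆ k ∈ Finset.Icc (0 : ℤ) j, S k := by
  have key : ∀ n : ℕ, j ≤ d - n → x ∈ ⨆ k ∈ Finset.Icc (0 : ℤ) (d - n), S k := by
    intro n
    induction n with
    | zero => intro _; simp only [Nat.cast_zero, sub_zero, htot, Submodule.mem_top]
    | succ n ih =>
      intro hn
      push_cast at hn ⊢
      have h1 := lowSum_sub_smul hS hT (d - n) (ih (by omega))
      rw [hx, ← sub_smul] at h1
      rw [← sub_sub]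
      exact (Submodule.smul_mem_iff _ (sub_ne_zero.2 (hθ (d - n) (by omega) (by omega)))).1 h1
  have h := key (d - j).toNat (by omega)
  rwa [show d - ((d - j).toNat : ℤ) = j by omega] at h

end PartialSums

/-! ### The two split decompositions -/


theorem stmt_8
    {𝕂 : Type*} [Field 𝕂] [IsAlgClosed 𝕂]
    {V : Type*} [AddCommGroup V] [Module 𝕂 V] [FiniteDimensional 𝕂 V]
    (hV : 0 < Module.finrank 𝕂 V)
    {q : 𝕂} (hq0 : q ≠ 0) (hqru : ∀ n : ℕ, 0 < n → q ^ n ≠ 1)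
    {c : 𝕂} (hc : c ≠ 0)
    (A Astar : Module.End 𝕂 V)
    (d : ℤ) (hd : 0 ≤ d)
    (Vs Vst : ℤ → Submodule 𝕂 V)
    (hVout : ∀ i : ℤ, i < 0 ∨ d < i → Vs i = ⊥)
    (hVstout : ∀ i : ℤ, i < 0 ∨ d < i → Vst i = ⊥)
    (hVeig : ∀ i : ℤ, 0 ≤ i → i ≤ d → Vs i = Module.End.eigenspace A (q ^ (2*i - d)))
    (hVne : ∀ i : ℤ, 0 ≤ i → i ≤ d → Vs i ≠ ⊥)
    (hVtot : (⨆ i ∈ Finset.Icc (0:ℤ) d, Vs i) = ⊤)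
    (hVsteig : ∀ i : ℤ, 0 ≤ i → i ≤ d →
      Vst i = Module.End.eigenspace Astar (q ^ (2*i - d) + c * q ^ (d - 2*i)))
    (hVstne : ∀ i : ℤ, 0 ≤ i → i ≤ d → Vst i ≠ ⊥)
    (hVsttot : (⨆ i ∈ Finset.Icc (0:ℤ) d, Vst i) = ⊤)
    (htd1 : ∀ i : ℤ, Submodule.map Astar (Vs i) ≤ Vs (i-1) ⊔ Vs i ⊔ Vs (i+1))
    (htd2 : ∀ i : ℤ, Submodule.map A (Vst i) ≤ Vst (i-1) ⊔ Vst i ⊔ Vst (i+1))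
    (hirr : ∀ W : Submodule 𝕂 V, Submodule.map A W ≤ W → Submodule.map Astar W ≤ W →
      W = ⊥ ∨ W = ⊤)
    (Us : ℤ → Submodule 𝕂 V)
    (hUout : ∀ i : ℤ, i < 0 ∨ d < i → Us i = ⊥)
    (hUdef : ∀ i : ℤ, 0 ≤ i → i ≤ d →
      Us i = (⨆ j ∈ Finset.Icc (0:ℤ) i, Vst j) ⊓ (⨆ j ∈ Finset.Icc i d, Vs j))
    (hUtot : (⨆ i ∈ Finset.Icc (0:ℤ) d, Us i) = ⊤)
    (K Kinv : Module.End 𝕂 V)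
    (hK : ∀ i : ℤ, 0 ≤ i → i ≤ d → ∀ v ∈ Us i, K v = q ^ (2*i - d) • v)
    (hKinv : ∀ i : ℤ, 0 ≤ i → i ≤ d → ∀ v ∈ Us i, Kinv v = q ^ (d - 2*i) • v)
    (hKKinv : K * Kinv = 1) (hKinvK : Kinv * K = 1)
    (Ws : ℤ → Submodule 𝕂 V)
    (hWout : ∀ i : ℤ, i < 0 ∨ d < i → Ws i = ⊥)
    (hWdef : ∀ i : ℤ, 0 ≤ i → i ≤ d →
      Ws i = (⨆ j ∈ Finset.Icc (0:ℤ) i, Vst j) ⊓ (⨆ j ∈ Finset.Icc (0:ℤ) (d - i), Vs j))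
    (hWtot : (⨆ i ∈ Finset.Icc (0:ℤ) d, Ws i) = ⊤)
    (B : Module.End 𝕂 V)
    (hB : ∀ i : ℤ, 0 ≤ i → i ≤ d → ∀ v ∈ Ws i, B v = q ^ (2*i - d) • v)
    :
    ∀ i : ℤ, 0 ≤ i → i ≤ d →
      Submodule.map (B - K) (Us i) ≤ Us (i - 1) ∧
      Submodule.map (Astar - B - c • Kinv) (Us i) ≤ Us (i - 1) := by
  -- Since spaces out of range are zero, every description extends to all integer indices.
  have hVeig' : ∀ i : ℤ, ∀ x ∈ Vs i, A x = q ^ (2*i - d) • x := by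
    intro i x hx
    by_cases h : i < 0 ∨ d < i
    · rw [hVout i h, Submodule.mem_bot] at hx; simp [hx]
    · rw [hVeig i (by omega) (by omega)] at hx
      exact Module.End.mem_eigenspace_iff.1 hx
  have hVsteig' : ∀ i : ℤ, ∀ x ∈ Vst i, Astar x = (q ^ (2*i - d) + c * q ^ (d - 2*i)) • x := by
    intro i x hx
    by_cases h : i < 0 ∨ d < i
    · rw [hVstout i h, Submodule.mem_bot] at hx; simp [hx]
    · rw [hVsteig i (by omega) (by omega)] at hx
      exact Module.End.mem_eigenspace_iff.1 hx
  have hK' : ∀ i : ℤ, ∀ x ∈ Us i, K x = q ^ (2*i - d) • x := by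
    intro i x hx
    by_cases h : i < 0 ∨ d < i
    · rw [hUout i h, Submodule.mem_bot] at hx; simp [hx]
    · exact hK i (by omega) (by omega) x hx
  have hB' : ∀ i : ℤ, ∀ x ∈ Ws i, B x = q ^ (2*i - d) • x := by
    intro i x hx
    by_cases h : i < 0 ∨ d < i
    · rw [hWout i h, Submodule.mem_bot] at hx; simp [hx]
    · exact hB i (by omega) (by omega) x hx
  have hVlo : ∀ i : ℤ, i < 0 → Vs i = ⊥ := fun i h => hVout i (Or.inl h)
  have hVhi : ∀ i : ℤ, d < i → Vs i = ⊥ := fun i h => hVout i (Or.inr h)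
  have hVstlo : ∀ i : ℤ, i < 0 → Vst i = ⊥ := fun i h => hVstout i (Or.inl h)
  have hUlo : ∀ i : ℤ, i < 0 → Us i = ⊥ := fun i h => hUout i (Or.inl h)
  have hWlo : ∀ i : ℤ, i < 0 → Ws i = ⊥ := fun i h => hWout i (Or.inl h)
  have hUdef' : ∀ i : ℤ,
      Us i = (⨆ j ∈ Finset.Icc (0:ℤ) i, Vst j) ⊓ (⨆ j ∈ Finset.Icc i d, Vs j) := by
    intro i
    by_cases h : i < 0 ∨ d < i
    · rw [hUout i h]
      rcases h with h | h <;> simp [Finset.Icc_eq_empty_of_lt h]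
    · exact hUdef i (by omega) (by omega)
  have hWdef' : ∀ i : ℤ,
      Ws i = (⨆ j ∈ Finset.Icc (0:ℤ) i, Vst j) ⊓ (⨆ j ∈ Finset.Icc (0:ℤ) (d - i), Vs j) := by
    intro i
    by_cases h : i < 0 ∨ d < i
    · rw [hWout i h]
      rcases h with h | h
      · simp [Finset.Icc_eq_empty_of_lt h]
      · simp [Finset.Icc_eq_empty_of_lt (show d - i < 0 by omega)]
    · exact hWdef i (by omega) (by omega)
  have hqinj : ∀ m n : ℤ, q ^ m = q ^ n → m = n := by
    have aux : ∀ m n : ℤ, m < n → q ^ m ≠ q ^ n := by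
      intro m n hmn h
      refine hqru (n - m).toNat (by omega) ?_
      rw [← zpow_natCast, Int.toNat_of_nonneg (by omega), zpow_sub₀ hq0, h,
        div_self (zpow_ne_zero _ hq0)]
    intro m n h
    rcases lt_trichotomy m n with h1 | h1 | h1
    · exact absurd h (aux m n h1)
    · exact h1
    · exact absurd h.symm (aux n m h1)
  have hVstsub : ∀ i : ℤ, ∀ x ∈ Vst i,
      Astar x - (q ^ (2*i - d) + c * q ^ (d - 2*i)) • x ∈ Vst (i - 1) := by
    intro i x hx
    rw [hVsteig' i x hx, sub_self]; exact zero_mem _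
  have hUraise : ∀ i : ℤ, ∀ x ∈ Us i, A x - q ^ (2*i - d) • x ∈ Us (i + 1) := by
    intro i x hx
    rw [hUdef', Submodule.mem_inf] at hx ⊢
    exact ⟨sub_mem (lowSum_tridiag hVstlo htd2 i hx.1)
      (Submodule.smul_mem _ _ (lowSum_mono hVstlo (by omega) hx.1)),
      highSum_sub_smul (θ := fun i : ℤ => q ^ (2*i - d)) hVhi hVeig' i hx.2⟩
  have hUlower : ∀ i : ℤ, ∀ x ∈ Us i,
      Astar x - (q ^ (2*i - d) + c * q ^ (d - 2*i)) • x ∈ Us (i - 1) := by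
    intro i x hx
    rw [hUdef', Submodule.mem_inf] at hx ⊢
    exact ⟨lowSum_sub_smul (θ := fun i : ℤ => q ^ (2*i - d) + c * q ^ (d - 2*i))
        hVstlo hVstsub i hx.1,
      sub_mem (highSum_tridiag hVhi htd1 i hx.2)
        (Submodule.smul_mem _ _ (highSum_mono hVhi (by omega) hx.2))⟩
  have hWraise : ∀ i : ℤ, ∀ x ∈ Ws i, A x - q ^ (d - 2*i) • x ∈ Ws (i + 1) := by
    intro i x hx
    rw [hWdef', Submodule.mem_inf] at hx ⊢
    refine ⟨sub_mem (lowSum_tridiag hVstlo htd2 i hx.1)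
      (Submodule.smul_mem _ _ (lowSum_mono hVstlo (by omega) hx.1)), ?_⟩
    have h := lowSum_sub_smul (T := A) (θ := fun i : ℤ => q ^ (2*i - d)) hVlo
      (fun i x hx => by rw [hVeig' i x hx, sub_self]; exact zero_mem _) (d - i) hx.2
    rw [show d - (i + 1) = d - i - 1 by ring]
    simpa only [show 2 * (d - i) - d = d - 2 * i by ring] using h
  have hWlower : ∀ i : ℤ, ∀ x ∈ Ws i,
      Astar x - (q ^ (2*i - d) + c * q ^ (d - 2*i)) • x ∈ Ws (i - 1) := by
    intro i x hx
    rw [hWdef', Submodule.mem_inf] at hx ⊢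
    refine ⟨lowSum_sub_smul (θ := fun i : ℤ => q ^ (2*i - d) + c * q ^ (d - 2*i))
        hVstlo hVstsub i hx.1, ?_⟩
    rw [show d - (i - 1) = d - i + 1 by ring]
    exact sub_mem (lowSum_tridiag hVlo htd1 _ hx.2)
        (Submodule.smul_mem _ _ (lowSum_mono hVlo (by omega) hx.2))
  have hdist : ∀ i j : ℤ, 0 ≤ i → i < j → j ≤ d →
      q ^ (2*i - d) + c * q ^ (d - 2*i) ≠ q ^ (2*j - d) + c * q ^ (d - 2*j) := by
    intro i j hi hij hj heq
    have hVV : Vst j = Vst i := by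
      rw [hVsteig i hi (by omega), hVsteig j (by omega) hj, heq]
    have hF : (⨆ k ∈ Finset.Icc (0:ℤ) j, Vst k) ≤ ⨆ k ∈ Finset.Icc (0:ℤ) (j - 1), Vst k := by
      refine iSup₂_le fun k hk => ?_
      have hkj := (Finset.mem_Icc.1 hk).2
      rcases hkj.eq_or_lt with rfl | hlt
      · rw [hVV]; exact le_lowSum hVstlo (by omega)
      · exact le_lowSum hVstlo (by omega)
    have hUU : Us j ≤ Us (j - 1) := by
      rw [hUdef' j, hUdef' (j - 1)]
      exact inf_le_inf hF (highSum_mono hVhi (by omega))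
    have hUj : Us j = ⊥ := by
      rw [eq_bot_iff]
      intro x hx
      have h1 := hK' j x hx
      rw [hK' (j - 1) x (hUU hx), ← sub_eq_zero, ← sub_smul, smul_eq_zero, sub_eq_zero] at h1
      rcases h1 with h1 | h1
      · have := hqinj _ _ h1
        omega
      · exact h1
    have hAS : Submodule.map A (⨆ k ∈ Finset.Icc (0:ℤ) (j - 1), Us k) ≤
        ⨆ k ∈ Finset.Icc (0:ℤ) (j - 1), Us k := by
      rw [Submodule.map_le_iff_le_comap]
      refine iSup₂_le fun k hk x hx => ?_
      have hkj := (Finset.mem_Icc.1 hk).2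
      rw [Submodule.mem_comap, ← sub_add_cancel (A x) (q ^ (2*k - d) • x)]
      refine add_mem ?_ (Submodule.smul_mem _ _ (le_lowSum hUlo hkj hx))
      have h1 := hUraise k x hx
      rcases hkj.eq_or_lt with rfl | hlt
      · rw [sub_add_cancel, hUj, Submodule.mem_bot] at h1
        rw [h1]; exact zero_mem _
      · exact le_lowSum hUlo (by omega) h1
    have hAstarS : Submodule.map Astar (⨆ k ∈ Finset.Icc (0:ℤ) (j - 1), Us k) ≤
        ⨆ k ∈ Finset.Icc (0:ℤ) (j - 1), Us k := by
      rw [Submodule.map_le_iff_le_comap]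
      refine iSup₂_le fun k hk x hx => ?_
      have hkj := (Finset.mem_Icc.1 hk).2
      rw [Submodule.mem_comap,
        ← sub_add_cancel (Astar x) ((q ^ (2*k - d) + c * q ^ (d - 2*k)) • x)]
      exact add_mem (le_lowSum hUlo (by omega) (hUlower k x hx))
        (Submodule.smul_mem _ _ (le_lowSum hUlo hkj hx))
    rcases hirr (⨆ k ∈ Finset.Icc (0:ℤ) (j - 1), Us k) hAS hAstarS with h | h
    · have h0 : Us 0 ≤ ⊥ := h ▸ le_lowSum hUlo (show (0:ℤ) ≤ j - 1 by omega)
      rw [hUdef 0 le_rfl hd, hVtot, inf_top_eq] at h0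
      exact hVstne 0 le_rfl hd (eq_bot_iff.2 ((le_lowSum hVstlo le_rfl).trans h0))
    · have hFtop : (⨆ k ∈ Finset.Icc (0:ℤ) j, Vst k) = ⊤ := by
        rw [eq_top_iff, ← h]
        refine iSup₂_le fun k hk => ?_
        rw [hUdef' k]
        have := (Finset.mem_Icc.1 hk).2
        exact inf_le_left.trans (lowSum_mono hVstlo (by omega))
      have h1 := hUdef' j
      rw [hUj, hFtop, top_inf_eq] at h1
      exact hVne d hd le_rfl (eq_bot_iff.2 (h1 ▸ le_highSum hVhi hj))
  have hFW : ∀ i : ℤ, i ≤ d →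
      (⨆ j ∈ Finset.Icc (0:ℤ) i, Vst j) ≤ ⨆ j ∈ Finset.Icc (0:ℤ) i, Ws j := by
    intro i hi
    refine iSup₂_le fun k hk x hx => ?_
    obtain ⟨hk0, hki⟩ := Finset.mem_Icc.1 hk
    exact lowSum_mono hWlo hki
      (mem_lowSum_of_eigen (θ := fun i : ℤ => q ^ (2*i - d) + c * q ^ (d - 2*i)) hWlo hWtot hWlower
        (hki.trans hi) (fun l hl hld => hdist k l hk0 hl hld) (hVsteig' k x hx))
  have hWF : ∀ i : ℤ,
      (⨆ j ∈ Finset.Icc (0:ℤ) i, Ws j) ≤ ⨆ j ∈ Finset.Icc (0:ℤ) i, Vst j := by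
    intro i
    refine iSup₂_le fun k hk => ?_
    rw [hWdef' k]
    exact inf_le_left.trans (lowSum_mono hVstlo (Finset.mem_Icc.1 hk).2)
  have hWeyl : ∀ x : V, q • A (B x) - q⁻¹ • B (A x) = (q - q⁻¹) • x := by
    suffices h : (⊤ : Submodule 𝕂 V) ≤
        LinearMap.ker (q • (A * B) - q⁻¹ • (B * A) - (q - q⁻¹) • (1 : Module.End 𝕂 V)) by
      intro x
      exact sub_eq_zero.1 (LinearMap.mem_ker.1 (h (Submodule.mem_top (x := x))))
    rw [← hWtot]
    refine iSup₂_le fun i _ x hx => ?_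
    rw [LinearMap.mem_ker]
    change q • A (B x) - q⁻¹ • B (A x) - (q - q⁻¹) • x = 0
    obtain ⟨y, hy⟩ : ∃ y, y = A x - q ^ (d - 2*i) • x := ⟨_, rfl⟩
    have hyW : y ∈ Ws (i + 1) := hy ▸ hWraise i x hx
    have hAx : A x = q ^ (d - 2*i) • x + y := by rw [hy]; abel
    have hBy := hB' _ y hyW
    have ht0 : q ^ (2*i - d) ≠ 0 := zpow_ne_zero _ hq0
    rw [show d - 2*i = -(2*i - d) by ring, zpow_neg] at hAx
    rw [show 2*(i+1) - d = (2*i - d) + 2 by ring, zpow_add₀ hq0, zpow_ofNat] at hBy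
    rw [hAx, hB' i x hx, map_smul, hAx, map_add, map_smul, hB' i x hx, hBy]
    generalize q ^ (2*i - d) = t at *
    match_scalars <;> field_simp <;> ring
  have hBV : ∀ k : ℤ, 1 ≤ k → k ≤ d → ∀ x ∈ Vs k, B x - q ^ (d - 2*k) • x ∈ Vs (k - 1) := by
    intro k hk hkd x hx
    rw [hVeig (k - 1) (by omega) (by omega), Module.End.mem_eigenspace_iff]
    have h := hWeyl x
    have hAx := hVeig' k x hx
    have ht0 : q ^ (2*k - d) ≠ 0 := zpow_ne_zero _ hq0
    rw [show d - 2*k = -(2*k - d) by ring, zpow_neg,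
      show 2*(k-1) - d = (2*k - d) + (-2) by ring, zpow_add₀ hq0,
      show q ^ (-2 : ℤ) = (q ^ 2)⁻¹ by rw [zpow_neg, zpow_ofNat]]
    rw [hAx, map_smul] at h
    generalize q ^ (2*k - d) = t at *
    have h2 : A (B x) = q⁻¹ • ((q - q⁻¹) • x + q⁻¹ • t • B x) := by
      rw [← h, sub_add_cancel, inv_smul_smul₀ hq0]
    rw [map_sub, map_smul, h2, hAx]
    match_scalars <;> field_simp <;> ring
  have hBG : ∀ i : ℤ, ∀ x ∈ (⨆ j ∈ Finset.Icc i d, Vs j),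
      B x ∈ ⨆ j ∈ Finset.Icc (i - 1) d, Vs j := by
    intro i x hx
    rcases le_or_gt i 0 with hi | hi
    · have htop : (⨆ j ∈ Finset.Icc (i - 1) d, Vs j) = ⊤ := by
        rw [eq_top_iff, ← hVtot]
        exact highSum_mono hVhi (by omega)
      rw [htop]; exact Submodule.mem_top
    · suffices h : (⨆ j ∈ Finset.Icc i d, Vs j) ≤
          (⨆ j ∈ Finset.Icc (i - 1) d, Vs j).comap B from h hx
      refine iSup₂_le fun k hk y hy => ?_
      obtain ⟨hik, hkd⟩ := Finset.mem_Icc.1 hk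
      rw [Submodule.mem_comap, ← sub_add_cancel (B y) (q ^ (d - 2*k) • y)]
      exact add_mem (le_highSum hVhi (by omega) (hBV k (by omega) hkd y hy))
        (Submodule.smul_mem _ _ (le_highSum hVhi (by omega) hy))
  have hBU : ∀ i : ℤ, i ≤ d → ∀ x ∈ Us i, B x - q ^ (2*i - d) • x ∈ Us (i - 1) := by
    intro i hid x hx
    rw [hUdef', Submodule.mem_inf] at hx ⊢
    exact ⟨hWF _ (lowSum_sub_smul (θ := fun i : ℤ => q ^ (2*i - d)) hWlo
        (fun i x hx => by rw [hB' i x hx, sub_self]; exact zero_mem _) i (hFW i hid hx.1)),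
      sub_mem (hBG i x hx.2) (Submodule.smul_mem _ _ (highSum_mono hVhi (by omega) hx.2))⟩
  intro i hi hid
  constructor
  · rintro _ ⟨x, hx, rfl⟩
    rw [LinearMap.sub_apply, hK' i x hx]
    exact hBU i hid x hx
  · rintro _ ⟨x, hx, rfl⟩
    have e : (Astar - B - c • Kinv) x =
        (Astar x - (q ^ (2*i - d) + c * q ^ (d - 2*i)) • x) - (B x - q ^ (2*i - d) • x) := by
      rw [LinearMap.sub_apply, LinearMap.sub_apply, LinearMap.smul_apply, hKinv i hi hid x hx]
      module
    rw [e]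
    exact sub_mem (hUlower i x hx) (hBU i hid x hx)
end

section
/- The linear maps B and K satisfy (qBK⁻¹ − q⁻¹K⁻¹B)/(q − q⁻¹) = I. -/
/-!
Write `F i = V*_0 + ⋯ + V*_i`, `G i = V_0 + ⋯ + V_i`, `H i = V_i + ⋯ + V_d`, so that
`U_i = F i ∩ H i` and `W_i = F i ∩ G (d - i)`. Multiplying by `K` on both sides, the claimed relation
says exactly that `B - q^(2i-d)` maps `U_i` into `U_{i-1} = F (i-1) ∩ H (i-1)`.

* *The flag `F`.* The sum over `i` of `F i ∩ G (d-1-i)` is invariant under `A` and `A*` and is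
  contained in the proper subspace `G (d-1)`, so it vanishes by irreducibility. Hence
  `F i = W_0 + ⋯ + W_i`, and `B - q^(2i-d)` maps `F i` into `F (i-1)`.
* *The flag `H`.* Since `A - q^(d-2i)` maps `W_i` into `W_{i+1}`, the maps `A` and `B` satisfy the
  `q`-Weyl relation `AB - q⁻² BA = (1 - q⁻²) I`. For `v ∈ V_i` this says that `B v - θ_i⁻¹ v` is
  annihilated by `A - θ_{i-1}`, whence `B V_i ⊆ V_{i-1} + V_i` and `B (H i) ⊆ H (i-1)` for `i ≥ 1`.
-/

/-! ### Partial sums of families of subspaces -/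

/-- The sum `P a + P (a+1) + ⋯ + P b` of a family of subspaces indexed by `ℤ`; it is `⊥` when
`b < a`. -/
def partialSum {𝕂 V : Type*} [Field 𝕂] [AddCommGroup V] [Module 𝕂 V]
    (P : ℤ → Submodule 𝕂 V) (a b : ℤ) : Submodule 𝕂 V :=
  ⨆ j ∈ Finset.Icc a b, P j

section PartialSum

variable {𝕂 V : Type*} [Field 𝕂] [AddCommGroup V] [Module 𝕂 V] {P : ℤ → Submodule 𝕂 V}

lemma le_partialSum {a b j : ℤ} (h1 : a ≤ j) (h2 : j ≤ b) : P j ≤ partialSum P a b :=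
  le_iSup₂_of_le j (Finset.mem_Icc.2 ⟨h1, h2⟩) le_rfl

lemma partialSum_le {a b : ℤ} {Q : Submodule 𝕂 V} (h : ∀ j, a ≤ j → j ≤ b → P j ≤ Q) :
    partialSum P a b ≤ Q :=
  iSup₂_le fun j hj => h j (Finset.mem_Icc.1 hj).1 (Finset.mem_Icc.1 hj).2

lemma partialSum_mono {a b a' b' : ℤ} (h1 : a' ≤ a) (h2 : b ≤ b') :
    partialSum P a b ≤ partialSum P a' b' :=
  partialSum_le fun _ h h' => le_partialSum (h1.trans h) (h'.trans h2)

lemma partialSum_eq_bot {a b : ℤ} (h : b < a) : partialSum P a b = ⊥ :=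
  eq_bot_iff.2 (partialSum_le fun j h1 h2 => by omega)

/-- A map that acts tridiagonally on the `P i` sends `P 0 + ⋯ + P i` into `P 0 + ⋯ + P (i+1)`. -/
lemma apply_mem_partialSum_succ {d : ℤ} (T : Module.End 𝕂 V)
    (hout : ∀ i : ℤ, i < 0 ∨ d < i → P i = ⊥)
    (hT : ∀ i : ℤ, Submodule.map T (P i) ≤ P (i - 1) ⊔ P i ⊔ P (i + 1))
    {i : ℤ} {x : V} (hx : x ∈ partialSum P 0 i) : T x ∈ partialSum P 0 (i + 1) := by
  have key : partialSum P 0 i ≤ (partialSum P 0 (i + 1)).comap T := by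
    refine partialSum_le fun j h1 h2 => ?_
    rw [← Submodule.map_le_iff_le_comap]
    refine (hT j).trans (sup_le (sup_le ?_ ?_) ?_)
    · by_cases h : j - 1 < 0
      · rw [hout _ (Or.inl h)]; exact bot_le
      · exact le_partialSum (by omega) (by omega)
    · exact le_partialSum (by omega) (by omega)
    · exact le_partialSum (by omega) (by omega)
  exact key hx

/-- If `T` acts on each `P j` with `0 ≤ j ≤ i` as the scalar `f j`, then `T - f i` sends
`P 0 + ⋯ + P i` into `P 0 + ⋯ + P (i-1)`. -/
lemma sub_smul_mem_partialSum_pred (T : Module.End 𝕂 V) (f : ℤ → 𝕂) {i : ℤ}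
    (hT : ∀ j : ℤ, 0 ≤ j → j ≤ i → ∀ v ∈ P j, T v = f j • v)
    {x : V} (hx : x ∈ partialSum P 0 i) : T x - f i • x ∈ partialSum P 0 (i - 1) := by
  have key : partialSum P 0 i ≤ (partialSum P 0 (i - 1)).comap (T - f i • (1 : Module.End 𝕂 V)) := by
    refine partialSum_le fun j h1 h2 v hv => ?_
    simp only [Submodule.mem_comap, LinearMap.sub_apply, LinearMap.smul_apply,
      Module.End.one_apply]
    rw [hT j h1 h2 v hv, ← sub_smul]
    by_cases h : j = i
    · subst h; simp
    · exact Submodule.smul_mem _ _ (le_partialSum h1 (by omega) hv)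
  simpa using key hx

lemma apply_eq_zero_of_partialSum_eq_top {d : ℤ} (htop : partialSum P 0 d = ⊤)
    (T : Module.End 𝕂 V)
    (hT : ∀ i : ℤ, 0 ≤ i → i ≤ d → ∀ v ∈ P i, T v = 0) (x : V) : T x = 0 := by
  have key : partialSum P 0 d ≤ LinearMap.ker T :=
    partialSum_le fun j h1 h2 v hv => by simpa using hT j h1 h2 v hv
  rw [htop] at key
  simpa using key (Submodule.mem_top (x := x))

/-- An eigenvector of `T` whose eigenvalue differs from the eigenvalues on `P 0, …, P (n-1)`
does not lie in `P 0 + ⋯ + P (n-1)`: if it did, applying `T - f (n-1)` would only rescale it and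
place it in `P 0 + ⋯ + P (n-2)`. -/
lemma eq_zero_of_mem_partialSum (T : Module.End 𝕂 V) (f : ℤ → 𝕂) {t : 𝕂} {x : V}
    (hx : T x = t • x) (n : ℕ)
    (hT : ∀ j : ℤ, 0 ≤ j → j < n → ∀ v ∈ P j, T v = f j • v)
    (hne : ∀ j : ℤ, 0 ≤ j → j < n → t ≠ f j)
    (hmem : x ∈ partialSum P 0 ((n : ℤ) - 1)) : x = 0 := by
  induction n with
  | zero =>
    rw [partialSum_eq_bot (by simp)] at hmem
    simpa using hmem
  | succ n ih =>
    refine ih (fun j h1 h2 => hT j h1 (by omega)) (fun j h1 h2 => hne j h1 (by omega)) ?_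
    have h := sub_smul_mem_partialSum_pred T f (i := n)
      (fun j h1 h2 => hT j h1 (by omega)) (by simpa using hmem)
    rw [hx, ← sub_smul] at h
    exact (Submodule.smul_mem_iff _ (sub_ne_zero.2 (hne n (by omega) (by omega)))).1 h

end PartialSum

lemma zpow_ne_zpow_of_not_root_of_unity {𝕂 : Type*} [Field 𝕂] {q : 𝕂} (hq0 : q ≠ 0)
    (hqru : ∀ n : ℕ, 0 < n → q ^ n ≠ 1) {a b : ℤ} (hab : b < a) : q ^ a ≠ q ^ b := by
  intro h
  refine hqru (a - b).toNat (by omega) ?_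
  rw [← zpow_natCast, Int.toNat_of_nonneg (by omega), zpow_sub₀ hq0, h,
    div_self (zpow_ne_zero _ hq0)]


/-! ### The `q`-Weyl relation between `B` and `K⁻¹` -/

theorem stmt_9
    {𝕂 : Type*} [Field 𝕂] [IsAlgClosed 𝕂]
    {V : Type*} [AddCommGroup V] [Module 𝕂 V] [FiniteDimensional 𝕂 V]
    (hV : 0 < Module.finrank 𝕂 V)
    {q : 𝕂} (hq0 : q ≠ 0) (hqru : ∀ n : ℕ, 0 < n → q ^ n ≠ 1)
    {c : 𝕂} (hc : c ≠ 0)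
    (A Astar : Module.End 𝕂 V)
    (d : ℤ) (hd : 0 ≤ d)
    (Vs Vst : ℤ → Submodule 𝕂 V)
    (hVout : ∀ i : ℤ, i < 0 ∨ d < i → Vs i = ⊥)
    (hVstout : ∀ i : ℤ, i < 0 ∨ d < i → Vst i = ⊥)
    (hVeig : ∀ i : ℤ, 0 ≤ i → i ≤ d → Vs i = Module.End.eigenspace A (q ^ (2*i - d)))
    (hVne : ∀ i : ℤ, 0 ≤ i → i ≤ d → Vs i ≠ ⊥)
    (hVtot : (⨆ i ∈ Finset.Icc (0:ℤ) d, Vs i) = ⊤)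
    (hVsteig : ∀ i : ℤ, 0 ≤ i → i ≤ d →
      Vst i = Module.End.eigenspace Astar (q ^ (2*i - d) + c * q ^ (d - 2*i)))
    (hVstne : ∀ i : ℤ, 0 ≤ i → i ≤ d → Vst i ≠ ⊥)
    (hVsttot : (⨆ i ∈ Finset.Icc (0:ℤ) d, Vst i) = ⊤)
    (htd1 : ∀ i : ℤ, Submodule.map Astar (Vs i) ≤ Vs (i-1) ⊔ Vs i ⊔ Vs (i+1))
    (htd2 : ∀ i : ℤ, Submodule.map A (Vst i) ≤ Vst (i-1) ⊔ Vst i ⊔ Vst (i+1))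
    (hirr : ∀ W : Submodule 𝕂 V, Submodule.map A W ≤ W → Submodule.map Astar W ≤ W →
      W = ⊥ ∨ W = ⊤)
    (Us : ℤ → Submodule 𝕂 V)
    (hUout : ∀ i : ℤ, i < 0 ∨ d < i → Us i = ⊥)
    (hUdef : ∀ i : ℤ, 0 ≤ i → i ≤ d →
      Us i = (⨆ j ∈ Finset.Icc (0:ℤ) i, Vst j) ⊓ (⨆ j ∈ Finset.Icc i d, Vs j))
    (hUtot : (⨆ i ∈ Finset.Icc (0:ℤ) d, Us i) = ⊤)
    (K Kinv : Module.End 𝕂 V)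
    (hK : ∀ i : ℤ, 0 ≤ i → i ≤ d → ∀ v ∈ Us i, K v = q ^ (2*i - d) • v)
    (hKinv : ∀ i : ℤ, 0 ≤ i → i ≤ d → ∀ v ∈ Us i, Kinv v = q ^ (d - 2*i) • v)
    (hKKinv : K * Kinv = 1) (hKinvK : Kinv * K = 1)
    (Ws : ℤ → Submodule 𝕂 V)
    (hWout : ∀ i : ℤ, i < 0 ∨ d < i → Ws i = ⊥)
    (hWdef : ∀ i : ℤ, 0 ≤ i → i ≤ d →
      Ws i = (⨆ j ∈ Finset.Icc (0:ℤ) i, Vst j) ⊓ (⨆ j ∈ Finset.Icc (0:ℤ) (d - i), Vs j))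
    (hWtot : (⨆ i ∈ Finset.Icc (0:ℤ) d, Ws i) = ⊤)
    (B : Module.End 𝕂 V)
    (hB : ∀ i : ℤ, 0 ≤ i → i ≤ d → ∀ v ∈ Ws i, B v = q ^ (2*i - d) • v)
    :
    (q - q⁻¹)⁻¹ • (q • (B * Kinv) - q⁻¹ • (Kinv * B)) = (1 : Module.End 𝕂 V) := by
  have hAV : ∀ i : ℤ, 0 ≤ i → i ≤ d → ∀ v ∈ Vs i, A v = q ^ (2*i - d) • v := by
    intro i h1 h2 v hv
    rw [hVeig i h1 h2] at hv
    exact Module.End.mem_eigenspace_iff.1 hv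
  have hAsV : ∀ i : ℤ, 0 ≤ i → i ≤ d → ∀ v ∈ Vst i,
      Astar v = (q ^ (2*i - d) + c * q ^ (d - 2*i)) • v := by
    intro i h1 h2 v hv
    rw [hVsteig i h1 h2] at hv
    exact Module.End.mem_eigenspace_iff.1 hv
  have hAG : ∀ i : ℤ, i ≤ d → ∀ x ∈ partialSum Vs 0 i,
      A x - q ^ (2*i - d) • x ∈ partialSum Vs 0 (i - 1) := fun i hi x hx =>
    sub_smul_mem_partialSum_pred A (fun i => q ^ (2*i - d))
      (fun j h1 h2 => hAV j h1 (h2.trans hi)) hx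
  have hAsF : ∀ i : ℤ, i ≤ d → ∀ x ∈ partialSum Vst 0 i,
      Astar x - (q ^ (2*i - d) + c * q ^ (d - 2*i)) • x ∈ partialSum Vst 0 (i - 1) :=
    fun i hi x hx =>
      sub_smul_mem_partialSum_pred Astar (fun i => q ^ (2*i - d) + c * q ^ (d - 2*i))
        (fun j h1 h2 => hAsV j h1 (h2.trans hi)) hx
  have hG_ne : partialSum Vs 0 (d - 1) ≠ ⊤ := by
    intro htop
    obtain ⟨v, hv, hv0⟩ := Submodule.exists_mem_ne_zero_of_ne_bot (hVne d hd le_rfl)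
    have hdn : ((d.toNat : ℕ) : ℤ) = d := Int.toNat_of_nonneg hd
    refine hv0 (eq_zero_of_mem_partialSum (P := Vs) A (fun i => q ^ (2*i - d))
      (hAV d hd le_rfl v hv) d.toNat (fun j h1 h2 => hAV j h1 (by omega))
      (fun j h1 h2 => zpow_ne_zpow_of_not_root_of_unity hq0 hqru (by omega)) ?_)
    rw [hdn, htop]
    exact Submodule.mem_top
  have hFG : ∀ i : ℤ, partialSum Vst 0 i ⊓ partialSum Vs 0 (d - 1 - i) = ⊥ := by
    -- Properness of this invariant subspace comes from `G (d-1)` and not from `F (d-1)`: the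
    -- eigenvalues `θ_i` are distinct, while `θ*_i = θ*_j` is not excluded for special values of `c`.
    set X : Submodule 𝕂 V := ⨆ i : ℤ, partialSum Vst 0 i ⊓ partialSum Vs 0 (d - 1 - i) with hX
    have hle : ∀ i : ℤ, partialSum Vst 0 i ⊓ partialSum Vs 0 (d - 1 - i) ≤ X := fun i =>
      le_iSup (fun i : ℤ => partialSum Vst 0 i ⊓ partialSum Vs 0 (d - 1 - i)) i
    have hXA : Submodule.map A X ≤ X := by
      rw [Submodule.map_le_iff_le_comap]
      refine iSup_le fun i x hx => ?_
      rcases lt_or_ge i 0 with hi | hi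
      · rw [partialSum_eq_bot hi, bot_inf_eq, Submodule.mem_bot] at hx
        simp [hx]
      have h1 : A x - q ^ (2*(d - 1 - i) - d) • x ∈ X := by
        refine hle (i + 1) ⟨sub_mem (apply_mem_partialSum_succ A hVstout htd2 hx.1)
          (Submodule.smul_mem _ _ (partialSum_mono le_rfl (by omega) hx.1)), ?_⟩
        have := hAG (d - 1 - i) (by omega) x hx.2
        rwa [show d - 1 - i - 1 = d - 1 - (i + 1) by ring] at this
      simpa using add_mem h1 (Submodule.smul_mem X (q ^ (2*(d - 1 - i) - d)) (hle i hx))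
    have hXAs : Submodule.map Astar X ≤ X := by
      rw [Submodule.map_le_iff_le_comap]
      refine iSup_le fun i x hx => ?_
      rcases le_or_gt d i with hi | hi
      · rw [partialSum_eq_bot (show d - 1 - i < 0 by omega), inf_bot_eq, Submodule.mem_bot] at hx
        simp [hx]
      have h1 : Astar x - (q ^ (2*i - d) + c * q ^ (d - 2*i)) • x ∈ X := by
        refine hle (i - 1) ⟨hAsF i hi.le x hx.1, ?_⟩
        have := apply_mem_partialSum_succ Astar hVout htd1 hx.2
        rw [show d - 1 - i + 1 = d - 1 - (i - 1) by ring] at this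
        exact sub_mem this (Submodule.smul_mem _ _ (partialSum_mono le_rfl (by omega) hx.2))
      simpa using add_mem h1
        (Submodule.smul_mem X (q ^ (2*i - d) + c * q ^ (d - 2*i)) (hle i hx))
    have hXG : X ≤ partialSum Vs 0 (d - 1) := by
      refine iSup_le fun i => ?_
      rcases lt_or_ge i 0 with hi | hi
      · rw [partialSum_eq_bot hi, bot_inf_eq]; exact bot_le
      · exact inf_le_right.trans (partialSum_mono le_rfl (by omega))
    intro i
    rcases hirr X hXA hXAs with h | h
    · exact eq_bot_iff.2 (h ▸ hle i)
    · exact absurd (top_le_iff.1 (h ▸ hXG)) hG_ne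
  have hW : ∀ i : ℤ, 0 ≤ i → i ≤ d → Ws i = partialSum Vst 0 i ⊓ partialSum Vs 0 (d - i) := hWdef
  have hU : ∀ i : ℤ, 0 ≤ i → i ≤ d → Us i = partialSum Vst 0 i ⊓ partialSum Vs i d := hUdef
  have hWtot' : partialSum Ws 0 d = ⊤ := hWtot
  have hFW : ∀ i : ℤ, 0 ≤ i → i ≤ d → partialSum Vst 0 i ≤ partialSum Ws 0 i := by
    intro i hi hid x hx
    have hsplit : partialSum Ws 0 d ≤ partialSum Ws 0 i ⊔ partialSum Ws (i + 1) d := by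
      refine partialSum_le fun j h1 h2 => ?_
      rcases le_or_gt j i with h | h
      · exact le_sup_of_le_left (le_partialSum h1 h)
      · exact le_sup_of_le_right (le_partialSum (by omega) h2)
    obtain ⟨a, ha, b, hb, rfl⟩ := Submodule.mem_sup.1
      (hsplit (hWtot' ▸ Submodule.mem_top : x ∈ partialSum Ws 0 d))
    have haF : a ∈ partialSum Vst 0 i := by
      refine (partialSum_le fun j h1 h2 => ?_ : partialSum Ws 0 i ≤ partialSum Vst 0 i) ha
      rw [hW j h1 (by omega)]
      exact inf_le_left.trans (partialSum_mono le_rfl h2)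
    have hbG : b ∈ partialSum Vs 0 (d - 1 - i) := by
      refine (partialSum_le fun j h1 h2 => ?_ :
        partialSum Ws (i + 1) d ≤ partialSum Vs 0 (d - 1 - i)) hb
      rw [hW j (by omega) h2]
      exact inf_le_right.trans (partialSum_mono le_rfl (by omega))
    have hb0 : b ∈ partialSum Vst 0 i ⊓ partialSum Vs 0 (d - 1 - i) :=
      ⟨(Submodule.add_mem_iff_right _ haF).1 hx, hbG⟩
    rw [hFG i, Submodule.mem_bot] at hb0
    simpa [hb0] using ha
  have hBF : ∀ i : ℤ, 0 ≤ i → i ≤ d → ∀ x ∈ partialSum Vst 0 i,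
      B x - q ^ (2*i - d) • x ∈ partialSum Vst 0 (i - 1) := by
    intro i hi hid x hx
    have h := sub_smul_mem_partialSum_pred B (fun i => q ^ (2*i - d))
      (fun j h1 h2 => hB j h1 (h2.trans hid)) (hFW i hi hid hx)
    refine (partialSum_le fun j h1 h2 => ?_ :
      partialSum Ws 0 (i - 1) ≤ partialSum Vst 0 (i - 1)) h
    rw [hW j h1 (by omega)]
    exact inf_le_left.trans (partialSum_mono le_rfl h2)
  -- The `q`-Weyl relation for `A` and `B`, in the form `q² AB - BA = (q² - 1) I`.
  have hAB : ∀ x : V, q ^ 2 • A (B x) - B (A x) = (q ^ 2 - 1) • x := by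
    intro x
    have h := apply_eq_zero_of_partialSum_eq_top hWtot'
      (q ^ 2 • (A * B) - B * A - (q ^ 2 - 1) • (1 : Module.End 𝕂 V)) ?_ x
    · simpa [sub_eq_zero] using h
    intro i hi hid w hw
    have hw' := hw
    rw [hW i hi hid] at hw'
    obtain ⟨u, hu⟩ : ∃ u, u = A w - q ^ (d - 2*i) • w := ⟨_, rfl⟩
    have huF : u ∈ partialSum Vst 0 (i + 1) := by
      rw [hu]
      exact sub_mem (apply_mem_partialSum_succ A hVstout htd2 hw'.1)
        (Submodule.smul_mem _ _ (partialSum_mono le_rfl (by omega) hw'.1))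
    have huG : u ∈ partialSum Vs 0 (d - (i + 1)) := by
      have := hAG (d - i) (by omega) w hw'.2
      rwa [show 2*(d - i) - d = d - 2*i by ring, ← hu,
        show d - i - 1 = d - (i + 1) by ring] at this
    have hBu : B u = q ^ (2*(i + 1) - d) • u := by
      rcases hid.lt_or_eq with h | h
      · exact hB (i + 1) (by omega) (by omega) u (by
          rw [hW (i + 1) (by omega) (by omega)]; exact ⟨huF, huG⟩)
      · rw [partialSum_eq_bot (by omega), Submodule.mem_bot] at huG
        simp [huG]
    have hAw : A w = q ^ (d - 2*i) • w + u := by rw [hu]; abel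
    have e1 : q ^ (2*i - d) * q ^ (d - 2*i) = 1 := by
      rw [← zpow_add₀ hq0, show 2*i - d + (d - 2*i) = 0 by ring, zpow_zero]
    have e2 : q ^ (2*(i + 1) - d) = q ^ 2 * q ^ (2*i - d) := by
      rw [show 2*(i + 1) - d = 2 + (2*i - d) by ring, zpow_add₀ hq0]; norm_cast
    simp only [LinearMap.sub_apply, LinearMap.smul_apply, Module.End.mul_apply,
      Module.End.one_apply, hAw, hB i hi hid w hw, map_smul, map_add, hBu, e2]
    match_scalars
    · linear_combination (q ^ 2 - 1) * e1
    · ring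
  -- The `θ_i`-eigenvector `v` satisfies `(A - θ_{i-1}) (B v - θ_i⁻¹ v) = 0`.
  have hBV : ∀ i : ℤ, 1 ≤ i → i ≤ d → ∀ v ∈ Vs i, B v ∈ Vs (i - 1) ⊔ Vs i := by
    intro i hi hid v hv
    have hAv := hAV i (by omega) hid v hv
    have ht : q ^ (2*i - d) ≠ 0 := zpow_ne_zero _ hq0
    have e : q ^ (2*(i - 1) - d) = q ^ (2*i - d) * (q ^ 2)⁻¹ := by
      rw [show 2*(i - 1) - d = (2*i - d) - 2 by ring, zpow_sub₀ hq0, div_eq_mul_inv]; norm_cast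
    have hy : B v - (q ^ (2*i - d))⁻¹ • v ∈ Vs (i - 1) := by
      rw [hVeig (i - 1) (by omega) (by omega), Module.End.mem_eigenspace_iff, e]
      have h := hAB v
      rw [hAv, map_smul, sub_eq_iff_eq_add] at h
      have h' : A (B v) = (q ^ 2)⁻¹ • ((q ^ 2 - 1) • v + q ^ (2*i - d) • B v) := by
        rw [← h, smul_smul, inv_mul_cancel₀ (pow_ne_zero 2 hq0), one_smul]
      rw [map_sub, map_smul, hAv, h']
      match_scalars
      · field_simp
        ring
      · field_simp
    have := Submodule.add_mem_sup hy (Submodule.smul_mem _ (q ^ (2*i - d))⁻¹ hv)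
    simpa using this
  have hBH : ∀ i : ℤ, 1 ≤ i → ∀ x ∈ partialSum Vs i d, B x ∈ partialSum Vs (i - 1) d := by
    intro i hi x hx
    have key : partialSum Vs i d ≤ (partialSum Vs (i - 1) d).comap B :=
      partialSum_le fun j h1 h2 v hv =>
        (sup_le (le_partialSum (by omega) (by omega)) (le_partialSum (by omega) h2) :
          Vs (j - 1) ⊔ Vs j ≤ _) (hBV j (by omega) h2 v hv)
    exact key hx
  have hqq : q - q⁻¹ ≠ 0 := by
    intro h
    refine hqru 2 (by norm_num) ?_
    field_simp at h
    linear_combination h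
  ext x
  have h := apply_eq_zero_of_partialSum_eq_top (P := Us) hUtot
    ((q - q⁻¹)⁻¹ • (q • (B * Kinv) - q⁻¹ • (Kinv * B)) - 1) ?_ x
  · simpa only [LinearMap.sub_apply, sub_eq_zero] using h
  intro i hi hid v hv
  have hv' := hv
  rw [hU i hi hid] at hv'
  obtain ⟨u, hu⟩ : ∃ u, u = B v - q ^ (2*i - d) • v := ⟨_, rfl⟩
  have huF : u ∈ partialSum Vst 0 (i - 1) := hu ▸ hBF i hi hid v hv'.1
  have hKu : Kinv u = q ^ (d - 2*(i - 1)) • u := by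
    -- For `i = 0` there is no `U_{i-1}`, but then `u ∈ F (-1) = 0`.
    rcases hi.lt_or_eq with h | h
    · refine hKinv (i - 1) (by omega) (by omega) u ?_
      rw [hU (i - 1) (by omega) (by omega)]
      refine ⟨huF, ?_⟩
      rw [hu]
      exact sub_mem (hBH i (by omega) v hv'.2)
        (Submodule.smul_mem _ _ (partialSum_mono (by omega) le_rfl hv'.2))
    · rw [partialSum_eq_bot (by omega), Submodule.mem_bot] at huF
      simp [huF]
  have hBv : B v = q ^ (2*i - d) • v + u := by rw [hu]; abel
  have e1 : q ^ (2*i - d) * q ^ (d - 2*i) = 1 := by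
    rw [← zpow_add₀ hq0, show 2*i - d + (d - 2*i) = 0 by ring, zpow_zero]
  have e2 : q ^ (d - 2*(i - 1)) = q ^ 2 * q ^ (d - 2*i) := by
    rw [show d - 2*(i - 1) = 2 + (d - 2*i) by ring, zpow_add₀ hq0]; norm_cast
  have hmain : q • B (Kinv v) - q⁻¹ • Kinv (B v) = (q - q⁻¹) • v := by
    simp only [hKinv i hi hid v hv, hBv, map_smul, map_add, hKu, e2]
    match_scalars
    · linear_combination (q - q⁻¹) * e1
    · field_simp
      ring
  simp only [LinearMap.sub_apply, LinearMap.smul_apply, Module.End.mul_apply,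
    Module.End.one_apply, hmain, smul_smul, inv_mul_cancel₀ hqq, one_smul, sub_self]
end

section
/- For every integer j ≥ 1: (qʲ(B−K)ʲ(A*−K−cK⁻¹) − q⁻ʲ(A*−K−cK⁻¹)(B−K)ʲ)/(qʲ − q⁻ʲ) = (B−K)^{j+1}, and (qʲ(A−K)ʲ(B−K) − q⁻ʲ(B−K)(A−K)ʲ)/(qʲ − q⁻ʲ) = −(q^{2−2j}K² − I)(A−K)^{j−1}. -/
/-!
Write `θ i = q ^ (2 i - d)`, `θ* i = θ i + c (θ i)⁻¹`, `R = A - K`, `L = A* - K - c K⁻¹` and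
`ψ = B - K`. Both identities are obtained by induction on `j` from the case `j = 1`, and the
case `j = 1` is formal once the following `q`-commutation relations are available.

* `R` raises and `L` lowers the decomposition `U`; hence `K R = q² R K` and `K L = q⁻² L K`.
* `A - B⁻¹` raises and `A* - B - c B⁻¹` lowers the decomposition `W`; hence
  `B A - 1 = q² (A B - 1)` and `B A* - B² - c = q⁻² (A* B - B² - c)`.
* `ψ` lowers `U`; hence `K ψ = q⁻² ψ K`.

The last item is the substantial one. On `U i` the map `ψ` acts as `B - θ i`. The relation
between `A` and `B` gives `(A - θ (j-1)) (B v - (θ j)⁻¹ v) = 0` for `v ∈ V j`, so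
`B V_j ⊆ V_{j-1} + V_j` and `ψ U_i ⊆ V_{i-1} + ⋯ + V_d`. On the other side
`V*_0 + ⋯ + V*_i = W_0 + ⋯ + W_i`, so `B - θ i` maps `V*_0 + ⋯ + V*_i` into
`V*_0 + ⋯ + V*_{i-1}`. The equality of flags comes from
`(V*_0 + ⋯ + V*_i) ∩ (V_0 + ⋯ + V_{d-i-1}) = 0`: the sum over `i` of these intersections is
invariant under `A` and `A*` and proper, hence zero by irreducibility.
-/

namespace TDPair

/-! ### Flags of eigenspaces -/

section Flags

variable {𝕂 V : Type*} [Field 𝕂] [AddCommGroup V] [Module 𝕂 V]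

/-- The partial sum `X a + ⋯ + X b` of a family of subspaces indexed by `ℤ`; it is `⊥` when
`b < a`. -/
def part (X : ℤ → Submodule 𝕂 V) (a b : ℤ) : Submodule 𝕂 V := ⨆ j ∈ Finset.Icc a b, X j

lemma le_part (X : ℤ → Submodule 𝕂 V) {a b j : ℤ} (h1 : a ≤ j) (h2 : j ≤ b) :
    X j ≤ part X a b :=
  le_iSup₂_of_le j (Finset.mem_Icc.2 ⟨h1, h2⟩) le_rfl

lemma part_le {X : ℤ → Submodule 𝕂 V} {a b : ℤ} {S : Submodule 𝕂 V}
    (h : ∀ j, a ≤ j → j ≤ b → X j ≤ S) : part X a b ≤ S :=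
  iSup₂_le fun j hj => h j (Finset.mem_Icc.1 hj).1 (Finset.mem_Icc.1 hj).2

lemma part_mono (X : ℤ → Submodule 𝕂 V) {a b a' b' : ℤ} (h1 : a' ≤ a) (h2 : b ≤ b') :
    part X a b ≤ part X a' b' :=
  part_le fun _ ha hb => le_part X (h1.trans ha) (hb.trans h2)

lemma part_eq_bot (X : ℤ → Submodule 𝕂 V) {a b : ℤ} (h : b < a) : part X a b = ⊥ :=
  le_bot_iff.1 (part_le fun j h1 h2 => absurd (h1.trans h2) (by omega))

lemma map_part_le {X : ℤ → Submodule 𝕂 V} {a b : ℤ} {S : Submodule 𝕂 V} {f : Module.End 𝕂 V}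
    (h : ∀ j, a ≤ j → j ≤ b → ∀ v ∈ X j, f v ∈ S) {v : V} (hv : v ∈ part X a b) : f v ∈ S := by
  have : part X a b ≤ S.comap f := part_le fun j h1 h2 v hv => h j h1 h2 v hv
  exact this hv

/-- An eigenvalue-shifted map shortens an increasing flag of eigenspaces. -/
lemma shift_low {X : ℤ → Submodule 𝕂 V} {f : Module.End 𝕂 V} {μ : ℤ → 𝕂}
    (h : ∀ i, ∀ v ∈ X i, f v = μ i • v) {i : ℤ} {v : V} (hv : v ∈ part X 0 i) :
    f v - μ i • v ∈ part X 0 (i - 1) := by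
  refine map_part_le (f := f - μ i • 1) (fun j h1 h2 v hv => ?_) hv
  simp only [LinearMap.sub_apply, LinearMap.smul_apply, Module.End.one_apply, h j v hv]
  rcases eq_or_lt_of_le h2 with rfl | h2
  · simp
  · have := le_part X h1 (by omega : j ≤ i - 1) hv
    exact sub_mem (Submodule.smul_mem _ _ this) (Submodule.smul_mem _ _ this)

/-- An eigenvalue-shifted map shortens a decreasing flag of eigenspaces. -/
lemma shift_high {X : ℤ → Submodule 𝕂 V} {f : Module.End 𝕂 V} {μ : ℤ → 𝕂}
    (h : ∀ i, ∀ v ∈ X i, f v = μ i • v) {i d : ℤ} {v : V} (hv : v ∈ part X i d) :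
    f v - μ i • v ∈ part X (i + 1) d := by
  refine map_part_le (f := f - μ i • 1) (fun j h1 h2 v hv => ?_) hv
  simp only [LinearMap.sub_apply, LinearMap.smul_apply, Module.End.one_apply, h j v hv]
  rcases eq_or_lt_of_le h1 with rfl | h1
  · simp
  · have := le_part X (by omega : i + 1 ≤ j) h2 hv
    exact sub_mem (Submodule.smul_mem _ _ this) (Submodule.smul_mem _ _ this)

/-- A map acting tridiagonally on `X` lengthens the flag `X 0 + ⋯ + X i` by at most one step. -/
lemma tri_low {X : ℤ → Submodule 𝕂 V} {f : Module.End 𝕂 V} {d : ℤ}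
    (hout : ∀ i : ℤ, i < 0 ∨ d < i → X i = ⊥)
    (h : ∀ i : ℤ, Submodule.map f (X i) ≤ X (i - 1) ⊔ X i ⊔ X (i + 1)) (t : 𝕂)
    {i : ℤ} {v : V} (hv : v ∈ part X 0 i) : f v - t • v ∈ part X 0 (i + 1) := by
  refine sub_mem (map_part_le (fun j h1 h2 v hv => ?_) hv)
    (Submodule.smul_mem _ _ (part_mono X le_rfl (by omega) hv))
  refine (h j).trans (sup_le (sup_le ?_ ?_) ?_) (Submodule.mem_map_of_mem hv)
  · rcases eq_or_lt_of_le h1 with rfl | h1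
    · rw [hout _ (Or.inl (by omega))]; exact bot_le
    · exact le_part X (by omega) (by omega)
  · exact le_part X (by omega) (by omega)
  · exact le_part X (by omega) (by omega)

lemma tri_high {X : ℤ → Submodule 𝕂 V} {f : Module.End 𝕂 V} {d : ℤ}
    (hout : ∀ i : ℤ, i < 0 ∨ d < i → X i = ⊥)
    (h : ∀ i : ℤ, Submodule.map f (X i) ≤ X (i - 1) ⊔ X i ⊔ X (i + 1)) (t : 𝕂)
    {i : ℤ} {v : V} (hv : v ∈ part X i d) : f v - t • v ∈ part X (i - 1) d := by
  refine sub_mem (map_part_le (fun j h1 h2 v hv => ?_) hv)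
    (Submodule.smul_mem _ _ (part_mono X (by omega) le_rfl hv))
  refine (h j).trans (sup_le (sup_le ?_ ?_) ?_) (Submodule.mem_map_of_mem hv)
  · exact le_part X (by omega) (by omega)
  · exact le_part X (by omega) (by omega)
  · rcases eq_or_lt_of_le h2 with rfl | h2
    · rw [hout _ (Or.inr (by omega))]; exact bot_le
    · exact le_part X (by omega) (by omega)

lemma end_ext {X : ℤ → Submodule 𝕂 V} {d : ℤ} (htot : part X 0 d = ⊤) {f g : Module.End 𝕂 V}
    (h : ∀ i, ∀ v ∈ X i, f v = g v) : f = g := by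
  refine LinearMap.ext fun v => ?_
  have : part X 0 d ≤ LinearMap.eqLocus f g := part_le fun j _ _ v hv => h j v hv
  exact this (htot ▸ Submodule.mem_top)

/-- `(V*_0 + ⋯ + V*_i) ∩ (V_0 + ⋯ + V_{d-i-1}) = 0`. The sum of these intersections over all `i`
is `A`- and `A*`-invariant, and it lies in `V_0 + ⋯ + V_{d-1}`. -/
lemma inf_eq_bot {A Astar : Module.End 𝕂 V} {d : ℤ} {Vs Vst : ℤ → Submodule 𝕂 V} {θ θs : ℤ → 𝕂}
    (hVout : ∀ i : ℤ, i < 0 ∨ d < i → Vs i = ⊥)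
    (hVstout : ∀ i : ℤ, i < 0 ∨ d < i → Vst i = ⊥)
    (hA : ∀ i, ∀ v ∈ Vs i, A v = θ i • v) (hAs : ∀ i, ∀ v ∈ Vst i, Astar v = θs i • v)
    (htd1 : ∀ i : ℤ, Submodule.map Astar (Vs i) ≤ Vs (i-1) ⊔ Vs i ⊔ Vs (i+1))
    (htd2 : ∀ i : ℤ, Submodule.map A (Vst i) ≤ Vst (i-1) ⊔ Vst i ⊔ Vst (i+1))
    (hirr : ∀ W : Submodule 𝕂 V, Submodule.map A W ≤ W → Submodule.map Astar W ≤ W →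
      W = ⊥ ∨ W = ⊤)
    (hprop : part Vs 0 (d - 1) ≠ ⊤) (i : ℤ) :
    part Vst 0 i ⊓ part Vs 0 (d - i - 1) = ⊥ := by
  set S : Submodule 𝕂 V := ⨆ i : ℤ, part Vst 0 i ⊓ part Vs 0 (d - i - 1) with hS
  have hle : ∀ i, part Vst 0 i ⊓ part Vs 0 (d - i - 1) ≤ S := fun i =>
    le_iSup (fun i : ℤ => part Vst 0 i ⊓ part Vs 0 (d - i - 1)) i
  have h1 : Submodule.map A S ≤ S := by
    rw [Submodule.map_le_iff_le_comap]
    refine iSup_le fun i v hv => ?_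
    have hv' : A v - θ (d - i - 1) • v ∈ S := by
      refine hle (i + 1) ⟨tri_low hVstout htd2 _ hv.1, ?_⟩
      rw [show d - (i + 1) - 1 = d - i - 1 - 1 by ring]
      exact shift_low hA hv.2
    simpa using add_mem hv' (Submodule.smul_mem _ (θ (d - i - 1)) (hle i hv))
  have h2 : Submodule.map Astar S ≤ S := by
    rw [Submodule.map_le_iff_le_comap]
    refine iSup_le fun i v hv => ?_
    have hv' : Astar v - θs i • v ∈ S := by
      refine hle (i - 1) ⟨shift_low hAs hv.1, ?_⟩
      rw [show d - (i - 1) - 1 = d - i - 1 + 1 by ring]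
      exact tri_low hVout htd1 _ hv.2
    simpa using add_mem hv' (Submodule.smul_mem _ (θs i) (hle i hv))
  have h3 : S ≤ part Vs 0 (d - 1) := by
    refine iSup_le fun i => ?_
    rcases lt_or_ge i 0 with hi | hi
    · rw [part_eq_bot _ hi, bot_inf_eq]; exact bot_le
    · exact inf_le_right.trans (part_mono _ le_rfl (by omega))
  rcases hirr S h1 h2 with h | h
  · exact le_bot_iff.1 (h ▸ hle i)
  · exact absurd (top_le_iff.1 (h ▸ h3)) hprop

end Flags

/-! ### Passing from exponent one to exponent `j` -/

section Algebra

variable {𝕂 E : Type*} [Field 𝕂] [Ring E] [Algebra 𝕂 E]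

/-- The induction for the first identity, with `p = q²`, `x = B - K`, `l = A* - K - c K⁻¹`. -/
lemma pow_left_relation {p : 𝕂} {x l : E} (h : p • (x * l) = l * x + (p - 1) • x ^ 2) (j : ℕ) :
    p ^ j • (x ^ j * l) = l * x ^ j + (p ^ j - 1) • x ^ (j + 1) := by
  induction j with
  | zero => simp
  | succ n ih =>
    have e1 : x ^ (n + 1) * l = x * (x ^ n * l) := by rw [pow_succ', mul_assoc]
    calc p ^ (n + 1) • (x ^ (n + 1) * l) = p • (x * (p ^ n • (x ^ n * l))) := by
          rw [e1, mul_smul_comm, smul_smul, pow_succ']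
      _ = (p • (x * l)) * x ^ n + (p * (p ^ n - 1)) • (x * x ^ (n + 1)) := by
          rw [ih, mul_add, smul_add, mul_smul_comm, smul_smul, smul_mul_assoc, mul_assoc]
      _ = _ := by
          rw [h, add_mul, smul_mul_assoc, mul_assoc, ← pow_succ', ← pow_succ', ← pow_add,
            show 2 + n = n + 1 + 1 by ring]
          module

/-- The induction for the second identity, with `p = q²`, `r = A - K`, `x = B - K`, `k = K`. -/
lemma pow_right_relation {p : 𝕂} (hp : p ≠ 0) {r x k : E} (hkr : k * r = p • (r * k))
    (h : p • (r * x) = x * r - (p - 1) • (k ^ 2 - 1)) (n : ℕ) :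
    p ^ (n + 1) • (r ^ (n + 1) * x) =
      x * r ^ (n + 1) - (p ^ (n + 1) - 1) • (((p ^ n)⁻¹ • k ^ 2 - 1) * r ^ n) := by
  have hk2 : r * k ^ 2 = (p ^ 2)⁻¹ • (k ^ 2 * r) := by
    have : k ^ 2 * r = p ^ 2 • (r * k ^ 2) := by
      rw [pow_two, mul_assoc, hkr, mul_smul_comm, ← mul_assoc, hkr, smul_mul_assoc, smul_smul,
        mul_assoc, pow_two]
    rw [this, smul_smul, inv_mul_cancel₀ (pow_ne_zero _ hp), one_smul]
  induction n with
  | zero => simpa using h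
  | succ n ih =>
    have e1 : r ^ (n + 1 + 1) * x = r * (r ^ (n + 1) * x) := by rw [pow_succ' r (n + 1), mul_assoc]
    have e2 : r * (((p ^ n)⁻¹ • k ^ 2 - 1) * r ^ n) =
        ((p ^ n)⁻¹ * (p ^ 2)⁻¹) • (k ^ 2 * r ^ (n + 1)) - r ^ (n + 1) := by
      rw [← mul_assoc, mul_sub, mul_smul_comm, hk2, smul_smul, mul_one, sub_mul, smul_mul_assoc,
        mul_assoc, ← pow_succ']
    calc p ^ (n + 1 + 1) • (r ^ (n + 1 + 1) * x)
        = p • (r * (p ^ (n + 1) • (r ^ (n + 1) * x))) := by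
          rw [e1, mul_smul_comm, smul_smul, pow_succ' p (n + 1)]
      _ = (p • (r * x)) * r ^ (n + 1) - (p * (p ^ (n + 1) - 1)) •
            (r * (((p ^ n)⁻¹ • k ^ 2 - 1) * r ^ n)) := by
          rw [ih, mul_sub, smul_sub, mul_smul_comm, smul_smul, smul_mul_assoc, mul_assoc]
      _ = _ := by
          rw [h, e2, sub_mul, smul_mul_assoc, mul_assoc, ← pow_succ', sub_mul, sub_mul,
            smul_mul_assoc, one_mul]
          match_scalars <;> field_simp <;> ring

/-- Multiplying through by `q ^ j` clears the denominator `q ^ j - q ^ (-j)`. -/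
lemma normalize {q : 𝕂} (hq0 : q ≠ 0) {j : ℕ} (hj : (q ^ 2) ^ j ≠ 1) {x y z : E}
    (h : (q ^ 2) ^ j • x = y + ((q ^ 2) ^ j - 1) • z) :
    (q ^ (j:ℤ) - q ^ (-(j:ℤ)))⁻¹ • (q ^ (j:ℤ) • x - q ^ (-(j:ℤ)) • y) = z := by
  have hqj : q ^ j ≠ 0 := pow_ne_zero _ hq0
  have e : (q ^ 2) ^ j = q ^ j * q ^ j := by rw [← pow_mul, mul_comm, pow_mul, pow_two]
  rw [e] at h hj
  rw [zpow_neg, zpow_natCast]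
  have hne : q ^ j - (q ^ j)⁻¹ ≠ 0 := by
    intro h0
    apply hj
    field_simp at h0
    linear_combination h0
  rw [inv_smul_eq_iff₀ hne]
  have : q ^ j • x = (q ^ j)⁻¹ • ((q ^ j * q ^ j) • x) := by
    rw [smul_smul]; congr 1; field_simp
  rw [this, h]
  match_scalars <;> field_simp
  ring

end Algebra

end TDPair

/-! ### The `q`-commutation relations -/

open TDPair in

theorem stmt_10
    {𝕂 : Type*} [Field 𝕂] [IsAlgClosed 𝕂]
    {V : Type*} [AddCommGroup V] [Module 𝕂 V] [FiniteDimensional 𝕂 V]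
    (hV : 0 < Module.finrank 𝕂 V)
    {q : 𝕂} (hq0 : q ≠ 0) (hqru : ∀ n : ℕ, 0 < n → q ^ n ≠ 1)
    {c : 𝕂} (hc : c ≠ 0)
    (A Astar : Module.End 𝕂 V)
    (d : ℤ) (hd : 0 ≤ d)
    (Vs Vst : ℤ → Submodule 𝕂 V)
    (hVout : ∀ i : ℤ, i < 0 ∨ d < i → Vs i = ⊥)
    (hVstout : ∀ i : ℤ, i < 0 ∨ d < i → Vst i = ⊥)
    (hVeig : ∀ i : ℤ, 0 ≤ i → i ≤ d → Vs i = Module.End.eigenspace A (q ^ (2*i - d)))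
    (hVne : ∀ i : ℤ, 0 ≤ i → i ≤ d → Vs i ≠ ⊥)
    (hVtot : (⨆ i ∈ Finset.Icc (0:ℤ) d, Vs i) = ⊤)
    (hVsteig : ∀ i : ℤ, 0 ≤ i → i ≤ d →
      Vst i = Module.End.eigenspace Astar (q ^ (2*i - d) + c * q ^ (d - 2*i)))
    (hVstne : ∀ i : ℤ, 0 ≤ i → i ≤ d → Vst i ≠ ⊥)
    (hVsttot : (⨆ i ∈ Finset.Icc (0:ℤ) d, Vst i) = ⊤)
    (htd1 : ∀ i : ℤ, Submodule.map Astar (Vs i) ≤ Vs (i-1) ⊔ Vs i ⊔ Vs (i+1))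
    (htd2 : ∀ i : ℤ, Submodule.map A (Vst i) ≤ Vst (i-1) ⊔ Vst i ⊔ Vst (i+1))
    (hirr : ∀ W : Submodule 𝕂 V, Submodule.map A W ≤ W → Submodule.map Astar W ≤ W →
      W = ⊥ ∨ W = ⊤)
    (Us : ℤ → Submodule 𝕂 V)
    (hUout : ∀ i : ℤ, i < 0 ∨ d < i → Us i = ⊥)
    (hUdef : ∀ i : ℤ, 0 ≤ i → i ≤ d →
      Us i = (⨆ j ∈ Finset.Icc (0:ℤ) i, Vst j) ⊓ (⨆ j ∈ Finset.Icc i d, Vs j))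
    (hUtot : (⨆ i ∈ Finset.Icc (0:ℤ) d, Us i) = ⊤)
    (K Kinv : Module.End 𝕂 V)
    (hK : ∀ i : ℤ, 0 ≤ i → i ≤ d → ∀ v ∈ Us i, K v = q ^ (2*i - d) • v)
    (hKinv : ∀ i : ℤ, 0 ≤ i → i ≤ d → ∀ v ∈ Us i, Kinv v = q ^ (d - 2*i) • v)
    (hKKinv : K * Kinv = 1) (hKinvK : Kinv * K = 1)
    (Ws : ℤ → Submodule 𝕂 V)
    (hWout : ∀ i : ℤ, i < 0 ∨ d < i → Ws i = ⊥)
    (hWdef : ∀ i : ℤ, 0 ≤ i → i ≤ d →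
      Ws i = (⨆ j ∈ Finset.Icc (0:ℤ) i, Vst j) ⊓ (⨆ j ∈ Finset.Icc (0:ℤ) (d - i), Vs j))
    (hWtot : (⨆ i ∈ Finset.Icc (0:ℤ) d, Ws i) = ⊤)
    (B : Module.End 𝕂 V)
    (hB : ∀ i : ℤ, 0 ≤ i → i ≤ d → ∀ v ∈ Ws i, B v = q ^ (2*i - d) • v)
    :
    ∀ j : ℕ, 1 ≤ j →
      (q ^ (j:ℤ) - q ^ (-(j:ℤ)))⁻¹ •
          (q ^ (j:ℤ) • ((B - K) ^ j * (Astar - K - c • Kinv))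
            - q ^ (-(j:ℤ)) • ((Astar - K - c • Kinv) * (B - K) ^ j)) = (B - K) ^ (j + 1) ∧
      (q ^ (j:ℤ) - q ^ (-(j:ℤ)))⁻¹ •
          (q ^ (j:ℤ) • ((A - K) ^ j * (B - K))
            - q ^ (-(j:ℤ)) • ((B - K) * (A - K) ^ j)) =
        -((q ^ (2 - 2*(j:ℤ)) • K ^ 2 - (1 : Module.End 𝕂 V)) * (A - K) ^ (j - 1)) := by
  set θ : ℤ → 𝕂 := fun i => q ^ (2*i - d) with hθ
  set θs : ℤ → 𝕂 := fun i => q ^ (2*i - d) + c * q ^ (d - 2*i) with hθs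
  have hθ0 : ∀ i, θ i ≠ 0 := fun i => zpow_ne_zero _ hq0
  have hθsucc : ∀ i, θ (i + 1) = q ^ 2 * θ i := fun i => by
    simp only [hθ]
    rw [← zpow_natCast, ← zpow_add₀ hq0]; congr 1; push_cast; ring
  have hθpred : ∀ i, q ^ 2 * θ (i - 1) = θ i := fun i => by rw [← hθsucc]; congr 1; ring
  have hθinv : ∀ i, q ^ (d - 2*i) = (θ i)⁻¹ := fun i => by
    simp only [hθ]
    rw [← zpow_neg]; congr 1; ring
  have hθrev : ∀ i, θ (d - i) = (θ i)⁻¹ := fun i => by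
    rw [← hθinv]; simp only [hθ]; congr 1; ring
  have hθsval : ∀ i, θs i = θ i + c * (θ i)⁻¹ := fun i => by rw [← hθinv]
  have hq2 : q ^ 2 ≠ 0 := pow_ne_zero _ hq0
  -- The hypotheses on subspaces, uniformly in `i : ℤ`.
  have extend : ∀ {X : ℤ → Submodule 𝕂 V} {f : Module.End 𝕂 V} {μ : ℤ → 𝕂},
      (∀ i : ℤ, i < 0 ∨ d < i → X i = ⊥) →
      (∀ i : ℤ, 0 ≤ i → i ≤ d → ∀ v ∈ X i, f v = μ i • v) → ∀ i, ∀ v ∈ X i, f v = μ i • v := by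
    intro X f μ h1 h2 i v hv
    by_cases hi : i < 0 ∨ d < i
    · rw [h1 i hi, Submodule.mem_bot] at hv
      simp [hv]
    · exact h2 i (by omega) (by omega) v hv
  have hA : ∀ i, ∀ v ∈ Vs i, A v = θ i • v := extend hVout fun i h1 h2 v hv => by
    rw [hVeig i h1 h2] at hv; exact Module.End.mem_eigenspace_iff.1 hv
  have hAs : ∀ i, ∀ v ∈ Vst i, Astar v = θs i • v := extend hVstout fun i h1 h2 v hv => by
    rw [hVsteig i h1 h2] at hv; exact Module.End.mem_eigenspace_iff.1 hv
  have hK' : ∀ i, ∀ v ∈ Us i, K v = θ i • v := extend hUout hK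
  have hB' : ∀ i, ∀ v ∈ Ws i, B v = θ i • v := extend hWout hB
  have hU : ∀ i, Us i = part Vst 0 i ⊓ part Vs i d := fun i => by
    by_cases h1 : i < 0
    · rw [hUout i (Or.inl h1), part_eq_bot Vst h1, bot_inf_eq]
    by_cases h2 : d < i
    · rw [hUout i (Or.inr h2), part_eq_bot Vs h2, inf_bot_eq]
    exact hUdef i (by omega) (by omega)
  have hW : ∀ i, Ws i = part Vst 0 i ⊓ part Vs 0 (d - i) := fun i => by
    by_cases h1 : i < 0
    · rw [hWout i (Or.inl h1), part_eq_bot Vst h1, bot_inf_eq]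
    by_cases h2 : d < i
    · rw [hWout i (Or.inr h2), part_eq_bot Vs (by omega), inf_bot_eq]
    exact hWdef i (by omega) (by omega)
  -- The raising and lowering actions of `A` and `A*` on the split decompositions.
  have hAU : ∀ i, ∀ v ∈ Us i, A v - θ i • v ∈ Us (i + 1) := fun i v hv => by
    rw [hU] at hv ⊢
    exact ⟨tri_low hVstout htd2 _ hv.1, shift_high hA hv.2⟩
  have hAsU : ∀ i, ∀ v ∈ Us i, Astar v - θs i • v ∈ Us (i - 1) := fun i v hv => by
    rw [hU] at hv ⊢
    exact ⟨shift_low hAs hv.1, tri_high hVout htd1 _ hv.2⟩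
  have hAW : ∀ i, ∀ v ∈ Ws i, A v - (θ i)⁻¹ • v ∈ Ws (i + 1) := fun i v hv => by
    rw [hW] at hv ⊢
    rw [← hθrev, show d - (i + 1) = d - i - 1 by ring]
    exact ⟨tri_low hVstout htd2 _ hv.1, shift_low hA hv.2⟩
  have hAsW : ∀ i, ∀ v ∈ Ws i, Astar v - θs i • v ∈ Ws (i - 1) := fun i v hv => by
    rw [hW] at hv ⊢
    rw [show d - (i - 1) = d - i + 1 by ring]
    exact ⟨shift_low hAs hv.1, tri_low hVout htd1 _ hv.2⟩
  have hKA : K * (A - K) = q ^ 2 • ((A - K) * K) := by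
    refine end_ext hUtot fun i v hv => ?_
    have h := hK' _ _ (hAU i v hv)
    rw [hθsucc] at h
    simp only [Module.End.mul_apply, LinearMap.sub_apply, LinearMap.smul_apply, hK' i v hv,
      map_smul, map_sub] at h ⊢
    linear_combination (norm := module) h
  have hBA : B * A - 1 = q ^ 2 • (A * B - 1) := by
    refine end_ext hWtot fun i v hv => ?_
    have h := hB' _ _ (hAW i v hv)
    rw [hθsucc] at h
    simp only [Module.End.mul_apply, LinearMap.sub_apply, LinearMap.smul_apply, hB' i v hv,
      map_smul, map_sub, Module.End.one_apply, smul_sub, smul_smul, mul_assoc,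
      inv_mul_cancel₀ (hθ0 i), mul_inv_cancel₀ (hθ0 i), mul_one, one_smul] at h ⊢
    exact h
  have hKAs : q ^ 2 • (K * Astar - K ^ 2 - c • (1 : Module.End 𝕂 V)) =
      Astar * K - K ^ 2 - c • (1 : Module.End 𝕂 V) := by
    refine end_ext hUtot fun i v hv => ?_
    have h := congrArg (q ^ 2 • ·) (hK' _ _ (hAsU i v hv))
    have h0 := hθ0 i
    simp only [smul_smul, hθpred] at h
    rw [hθsval] at h
    simp only [Module.End.mul_apply, LinearMap.sub_apply, LinearMap.smul_apply, hK' i v hv,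
      map_smul, map_sub, Module.End.one_apply, pow_two K] at h ⊢
    linear_combination (norm := skip) h
    match_scalars <;> field_simp <;> ring
  have hBAs : q ^ 2 • (B * Astar - B ^ 2 - c • (1 : Module.End 𝕂 V)) =
      Astar * B - B ^ 2 - c • (1 : Module.End 𝕂 V) := by
    refine end_ext hWtot fun i v hv => ?_
    have h := congrArg (q ^ 2 • ·) (hB' _ _ (hAsW i v hv))
    have h0 := hθ0 i
    simp only [smul_smul, hθpred] at h
    rw [hθsval] at h
    simp only [Module.End.mul_apply, LinearMap.sub_apply, LinearMap.smul_apply, hB' i v hv,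
      map_smul, map_sub, Module.End.one_apply, pow_two B] at h ⊢
    linear_combination (norm := skip) h
    match_scalars <;> field_simp <;> ring
  -- `V d` is nonzero and independent of the eigenspaces for the other eigenvalues.
  have hprop : part Vs 0 (d - 1) ≠ ⊤ := by
    intro htop
    refine hVne d hd le_rfl ?_
    have hle : part Vs 0 (d - 1) ≤ ⨆ (μ : 𝕂) (_ : μ ≠ θ d), Module.End.eigenspace A μ := by
      refine part_le fun j h1 h2 => ?_
      rw [hVeig j h1 (by omega)]
      refine le_iSup₂_of_le (θ j) ?_ le_rfl
      intro he
      refine hqru (2 * (d - j)).toNat (by omega) ?_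
      rw [← zpow_natCast, Int.toNat_of_nonneg (by omega),
        show 2 * (d - j) = (2 * d - d) - (2 * j - d) by ring, zpow_sub₀ hq0]
      exact (div_eq_one_iff_eq (hθ0 j)).2 he.symm
    have hdis := (Module.End.eigenspaces_iSupIndep A) (θ d)
    rw [htop, top_le_iff] at hle
    rw [hle, disjoint_top] at hdis
    rw [hVeig d hd le_rfl]
    exact hdis
  -- The part of `v` in `W (i+1) + ⋯ + W d` lies in the zero intersection of `inf_eq_bot`.
  have hflag : ∀ i, part Vst 0 i ≤ part Ws 0 i := fun i v hv => by
    have hle : part Ws 0 d ≤ part Ws 0 i ⊔ part Ws (i + 1) d := part_le fun j h1 h2 => by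
      rcases le_or_gt j i with h | h
      · exact le_sup_of_le_left (le_part Ws h1 h)
      · exact le_sup_of_le_right (le_part Ws (by omega) h2)
    have hv' : v ∈ part Ws 0 i ⊔ part Ws (i + 1) d :=
      hle ((show part Ws 0 d = ⊤ from hWtot) ▸ Submodule.mem_top)
    obtain ⟨a, ha, b, hb, rfl⟩ := Submodule.mem_sup.1 hv'
    have ha' : a ∈ part Vst 0 i := by
      refine part_le (fun j h1 h2 => ?_) ha
      rw [hW]; exact inf_le_left.trans (part_mono _ le_rfl h2)
    have hb1 : b ∈ part Vst 0 i := by simpa using sub_mem hv ha'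
    have hb2 : b ∈ part Vs 0 (d - i - 1) := by
      refine part_le (fun j h1 h2 => ?_) hb
      rw [hW]; exact inf_le_right.trans (part_mono _ le_rfl (by omega))
    have hb0 : b ∈ (⊥ : Submodule 𝕂 V) := by
      rw [← inf_eq_bot hVout hVstout hA hAs htd1 htd2 hirr hprop i]; exact ⟨hb1, hb2⟩
    rw [Submodule.mem_bot] at hb0
    simpa [hb0] using ha
  have hBlow : ∀ i, ∀ v ∈ part Vst 0 i, B v - θ i • v ∈ part Vst 0 (i - 1) := fun i v hv => by
    refine part_le (fun j h1 h2 => ?_) (shift_low hB' (hflag i hv))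
    rw [hW]; exact inf_le_left.trans (part_mono _ le_rfl h2)
  -- `B v - (θ j)⁻¹ v` is a `θ (j-1)`-eigenvector of `A` for `v ∈ V j`; for `i ≤ 0` the target is
  -- the whole space, which avoids the index `j - 1 = -1`.
  have hBhigh : ∀ i, ∀ v ∈ part Vs i d, B v ∈ part Vs (i - 1) d := fun i v hv => by
    rcases le_or_gt i 0 with hi | hi
    · exact part_mono Vs (by omega : i - 1 ≤ 0) le_rfl
        ((show part Vs 0 d = ⊤ from hVtot) ▸ Submodule.mem_top)
    refine map_part_le (fun j h1 h2 v hv => ?_) hv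
    have hx : B v - (θ j)⁻¹ • v ∈ Vs (j - 1) := by
      rw [hVeig (j - 1) (by omega) (by omega), Module.End.mem_eigenspace_iff]
      change A (B v - (θ j)⁻¹ • v) = θ (j - 1) • (B v - (θ j)⁻¹ • v)
      have h := LinearMap.congr_fun hBA v
      have h0 := hθ0 j
      have hp : θ (j - 1) = (q ^ 2)⁻¹ * θ j := by
        rw [← hθpred j, inv_mul_cancel_left₀ hq2]
      simp only [Module.End.mul_apply, LinearMap.sub_apply, LinearMap.smul_apply, hA j v hv,
        map_smul, map_sub, Module.End.one_apply] at h ⊢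
      rw [hp]
      linear_combination (norm := skip) (-(q ^ 2)⁻¹) • h
      match_scalars <;> field_simp <;> ring
    have := add_mem (le_part Vs (by omega : i - 1 ≤ j - 1) (by omega) hx)
      (Submodule.smul_mem _ (θ j)⁻¹ (le_part Vs (by omega : i - 1 ≤ j) h2 hv))
    simpa using this
  have hψU : ∀ i, ∀ v ∈ Us i, (B - K) v ∈ Us (i - 1) := fun i v hv => by
    rw [LinearMap.sub_apply, hK' i v hv]
    rw [hU] at hv ⊢
    exact ⟨hBlow i v hv.1, sub_mem (hBhigh i v hv.2)
      (Submodule.smul_mem _ _ (part_mono Vs (by omega) le_rfl hv.2))⟩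
  have hKψ : q ^ 2 • (K * (B - K)) = (B - K) * K := by
    refine end_ext hUtot fun i v hv => ?_
    have h := congrArg (q ^ 2 • ·) (hK' _ _ (hψU i v hv))
    simp only [smul_smul, hθpred] at h
    simp only [Module.End.mul_apply, LinearMap.smul_apply, hK' i v hv, map_smul] at h ⊢
    exact h
  have hKinvψ : q ^ 2 • ((B - K) * Kinv) = Kinv * (B - K) := by
    have h := congrArg (fun x => Kinv * x * Kinv) hKψ
    simp only [mul_smul_comm, smul_mul_assoc] at h
    rw [← mul_assoc Kinv K, hKinvK, one_mul, ← mul_assoc Kinv, mul_assoc _ K Kinv, hKKinv,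
      mul_one] at h
    exact h
  have hbase1 : q ^ 2 • ((B - K) * (Astar - K - c • Kinv)) =
      (Astar - K - c • Kinv) * (B - K) + (q ^ 2 - 1) • (B - K) ^ 2 := by
    simp only [mul_sub, sub_mul, mul_smul_comm, smul_mul_assoc, pow_two (B - K), smul_sub,
      pow_two B, pow_two K, hKKinv, hKinvK] at hBAs hKAs hKψ hKinvψ ⊢
    linear_combination (norm := module) hBAs - hKAs + hKψ - c • hKinvψ
  have hbase2 : q ^ 2 • ((A - K) * (B - K)) =
      (B - K) * (A - K) - (q ^ 2 - 1) • (K ^ 2 - 1) := by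
    simp only [mul_sub, sub_mul, smul_sub, pow_two K] at hBA hKA hKψ ⊢
    linear_combination (norm := module) hKA - hBA - hKψ
  intro j hj
  have hqj : (q ^ 2) ^ j ≠ 1 := by rw [← pow_mul]; exact hqru _ (by omega)
  refine ⟨normalize hq0 hqj (pow_left_relation hbase1 j), normalize hq0 hqj ?_⟩
  obtain ⟨n, rfl⟩ : ∃ n, j = n + 1 := ⟨j - 1, by omega⟩
  have h := pow_right_relation hq2 hKA hbase2 n
  have e : q ^ (2 - 2 * ((n + 1 : ℕ) : ℤ)) = ((q ^ 2) ^ n)⁻¹ := by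
    rw [← pow_mul, ← zpow_natCast, ← zpow_neg]; congr 1; push_cast; ring
  rw [e, smul_neg, ← sub_eq_add_neg, Nat.add_sub_cancel]
  exact h
end
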